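/- arXiv:2508.15996 — 2 statements merged into one kernel-verified Lean document; each statement's English description precedes it below -/
import Mathlib

section
/- Let p > 3 be a real number and let l be a nonzero real number. Then there exists a twice continuously differentiable function Z : (0,∞) → ℝ such that (i) Z''(r) + (3/r)·Z'(r) + |Z(r)|^{p-1}·Z(r) = 0 for all r > 0; (ii) there exist constants C > 0 and r₀ > 0 such that |r²·Z(r) − l| ≤ C·r^{4−2p} for all r ≥ r₀; and (iii) ∫₀^∞ |Z(r)|^{2(p−1)} r³ dr = ∞. -/
open MeasureTheory Set
open scoped ENNReal

lemma aux_fix (n l B L : ℝ) (hn : 0 < n) (hB : 0 ≤ B) (hL : 0 ≤ L) (φ : ℝ → ℝ)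
    (hφc : Continuous φ)
    (hφB : ∀ x, |φ x| ≤ B) (hφL : ∀ x y, |φ x - φ y| ≤ L * |x - y|) :
    ∃ v : ℝ → ℝ, Continuous v ∧ ∀ τ, 0 ≤ τ →
      v τ = l - (1/4) * ∫ σ in (0:ℝ)..τ, σ ^ n * φ (∫ θ in (0:ℝ)..1, v (σ * θ)) := by
  have hn1 : 0 < n + 1 := by linarith
  obtain ⟨K, hK⟩ : ∃ K, K = L + 1 := ⟨_, rfl⟩
  have hK0 : 0 < K := by linarith
  obtain ⟨e, he⟩ : ∃ e : ℝ → ℝ, e = fun x => Real.exp (K * |x| ^ (n+1)) := ⟨_, rfl⟩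
  have hec : Continuous e := by
    rw [he]
    exact Real.continuous_exp.comp (continuous_const.mul
      ((Real.continuous_rpow_const hn1.le).comp continuous_abs))
  have hepos : ∀ x, 0 < e x := fun x => by rw [he]; exact Real.exp_pos _
  have hemono : ∀ x y, |x| ≤ |y| → e x ≤ e y := fun x y h => by
    rw [he]
    apply Real.exp_le_exp.2
    gcongr
  have heint : ∀ x, 0 ≤ x → ∫ σ in (0:ℝ)..x, σ ^ n * e σ ≤ e x / K := by
    intro x hx
    have h1 : ∫ σ in (0:ℝ)..x, σ ^ n * e σ
        = Real.exp (K * x ^ (n+1)) / (K * (n+1)) - Real.exp (K * 0 ^ (n+1)) / (K * (n+1)) := by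
      apply intervalIntegral.integral_eq_sub_of_hasDerivAt
        (f := fun σ => Real.exp (K * σ ^ (n+1)) / (K * (n+1)))
      · intro σ hσ
        rw [uIcc_of_le hx] at hσ
        have h2 := (((Real.hasDerivAt_rpow_const (x := σ) (p := n+1)
          (Or.inr (by linarith))).const_mul K).exp).div_const (K * (n+1))
        refine h2.congr_deriv ?_
        rw [he]
        simp only [abs_of_nonneg hσ.1]
        rw [add_sub_cancel_right]
        field_simp
      · apply Continuous.intervalIntegrable
        exact (Real.continuous_rpow_const hn.le).mul hec
    rw [h1]
    have h3 : Real.exp (K * x ^ (n+1)) = e x := by rw [he]; simp [abs_of_nonneg hx]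
    rw [h3]
    have h4 : 0 < Real.exp (K * 0 ^ (n+1)) / (K * (n+1)) := by positivity
    have h5 : e x / (K * (n+1)) ≤ e x / K := by
      apply div_le_div_of_nonneg_left (hepos x).le hK0
      nlinarith
    linarith
  -- averaging
  obtain ⟨A, hA⟩ : ∃ A : (ℝ → ℝ) → ℝ → ℝ, A = fun w σ => ∫ θ in (0:ℝ)..1, e (σ * θ) * w (σ * θ) :=
    ⟨_, rfl⟩
  have hAc : ∀ w, Continuous w → Continuous (A w) := by
    intro w hw
    rw [hA]
    apply intervalIntegral.continuous_parametric_intervalIntegral_of_continuous'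
    simp only [Function.uncurry_def]
    fun_prop
  have hIc : ∀ w, Continuous w → Continuous (fun σ => σ ^ n * φ (A w σ)) := fun w hw =>
    (Real.continuous_rpow_const hn.le).mul (hφc.comp (hAc w hw))
  obtain ⟨N, hN⟩ : ∃ N : (ℝ → ℝ) → ℝ → ℝ, N = fun w τ =>
      (l - (1/4) * ∫ σ in (0:ℝ)..|τ|, σ ^ n * φ (A w σ)) / e τ := ⟨_, rfl⟩
  have hNc : ∀ w, Continuous w → Continuous (N w) := by
    intro w hw
    rw [hN]
    refine Continuous.div ?_ hec (fun x => (hepos x).ne')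
    refine continuous_const.sub (continuous_const.mul ?_)
    have := intervalIntegral.continuous_primitive (μ := volume)
      (fun a b => (hIc w hw).intervalIntegrable a b) 0
    exact this.comp continuous_abs
  have he1 : ∀ x, 1 ≤ e x := fun x => by
    rw [he]; apply Real.one_le_exp; positivity
  have hNB : ∀ w, ∀ x, ‖N w x‖ ≤ |l| + B := by
    intro w x
    have h1 : ‖∫ σ in (0:ℝ)..|x|, σ ^ n * φ (A w σ)‖ ≤ ∫ σ in (0:ℝ)..|x|, B * (σ ^ n * e σ) := by
      apply intervalIntegral.norm_integral_le_of_norm_le (abs_nonneg x)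
      · filter_upwards with t ht
        rw [norm_mul, Real.norm_eq_abs, Real.norm_eq_abs, abs_of_nonneg (Real.rpow_nonneg ht.1.le _)]
        have := hφB (A w t)
        have h3 := he1 t
        have h4 : 0 ≤ t ^ n := Real.rpow_nonneg ht.1.le _
        calc t ^ n * |φ (A w t)| ≤ t ^ n * (B * e t) := by
              gcongr; nlinarith
          _ = _ := by ring
      · apply Continuous.intervalIntegrable
        exact continuous_const.mul ((Real.continuous_rpow_const hn.le).mul hec)
    rw [intervalIntegral.integral_const_mul] at h1
    have h2 := heint |x| (abs_nonneg x)
    have h2' : e |x| = e x := by rw [he]; simp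
    rw [h2'] at h2
    have h3 : e x / K ≤ e x := div_le_self (hepos x).le (by linarith)
    rw [hN]
    simp only [norm_div, Real.norm_eq_abs, abs_of_pos (hepos x)]
    rw [div_le_iff₀ (hepos x)]
    rw [Real.norm_eq_abs] at h1
    have h5 : |∫ σ in (0:ℝ)..|x|, σ ^ n * φ (A w σ)| ≤ B * e x :=
      h1.trans (by gcongr; linarith)
    have h6 := abs_sub l ((1/4) * ∫ σ in (0:ℝ)..|x|, σ ^ n * φ (A w σ))
    rw [abs_mul, abs_of_pos (by norm_num : (0:ℝ) < 1/4)] at h6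
    have := he1 x
    have := abs_nonneg l
    nlinarith [mul_nonneg hB (hepos x).le]
  let T : BoundedContinuousFunction ℝ ℝ → BoundedContinuousFunction ℝ ℝ := fun w =>
    BoundedContinuousFunction.ofNormedAddCommGroup (N w) (hNc w w.continuous) (|l| + B) (hNB w)
  have hT : ContractingWith (1/2) T := by
    refine ⟨by norm_num, LipschitzWith.of_dist_le_mul ?_⟩
    intro w w'
    rw [BoundedContinuousFunction.dist_le (by positivity)]
    intro x
    set D := dist w w' with hD
    have hD0 : 0 ≤ D := dist_nonneg
    have hAd : ∀ t, |A w t - A w' t| ≤ D * e t := by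
      intro t
      rw [hA]
      simp only
      rw [← intervalIntegral.integral_sub]
      · have := intervalIntegral.norm_integral_le_of_norm_le_const (a := 0) (b := 1) (C := D * e t)
          (f := fun θ => e (t * θ) * w (t * θ) - e (t * θ) * w' (t * θ)) ?_
        · simpa using this
        · intro θ hθ
          rw [uIoc_of_le zero_le_one] at hθ
          rw [← mul_sub, norm_mul, Real.norm_eq_abs, abs_of_pos (hepos _), mul_comm D]
          have h1 : ‖w (t * θ) - w' (t * θ)‖ ≤ D := by
            rw [← dist_eq_norm]; exact BoundedContinuousFunction.dist_coe_le_dist _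
          have h2 : e (t * θ) ≤ e t := hemono _ _ (by
            rw [abs_mul, abs_of_pos hθ.1]
            nlinarith [abs_nonneg t, hθ.2])
          have := hepos t
          gcongr
      · apply Continuous.intervalIntegrable; fun_prop
      · apply Continuous.intervalIntegrable; fun_prop
    have h1 : ‖∫ σ in (0:ℝ)..|x|, (σ ^ n * φ (A w σ) - σ ^ n * φ (A w' σ))‖
        ≤ ∫ σ in (0:ℝ)..|x|, (L * D) * (σ ^ n * e σ) := by
      apply intervalIntegral.norm_integral_le_of_norm_le (abs_nonneg x)
      · filter_upwards with t ht
        rw [← mul_sub, norm_mul, Real.norm_eq_abs, Real.norm_eq_abs,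
          abs_of_nonneg (Real.rpow_nonneg ht.1.le _)]
        have h4 : 0 ≤ t ^ n := Real.rpow_nonneg ht.1.le _
        calc t ^ n * |φ (A w t) - φ (A w' t)| ≤ t ^ n * (L * (D * e t)) := by
              gcongr
              exact (hφL _ _).trans (by gcongr; exact hAd t)
          _ = _ := by ring
      · apply Continuous.intervalIntegrable
        exact continuous_const.mul ((Real.continuous_rpow_const hn.le).mul hec)
    rw [intervalIntegral.integral_const_mul, intervalIntegral.integral_sub
      ((hIc w w.continuous).intervalIntegrable _ _) ((hIc w' w'.continuous).intervalIntegrable _ _)] at h1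
    have h2 := heint |x| (abs_nonneg x)
    have h2' : e |x| = e x := by rw [he]; simp
    have h5 : L * D * ∫ σ in (0:ℝ)..|x|, σ ^ n * e σ ≤ D * e x := by
      calc _ ≤ L * D * (e x / K) := by
            rw [h2'] at h2
            gcongr
        _ = (L / K) * (D * e x) := by ring
        _ ≤ 1 * (D * e x) := by
            have := hepos x
            gcongr
            rw [div_le_one hK0]; linarith
        _ = _ := one_mul _
    show dist (N w x) (N w' x) ≤ _
    rw [hN, Real.dist_eq]
    simp only
    rw [← sub_div, abs_div, abs_of_pos (hepos x), div_le_iff₀ (hepos x)]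
    have h6 := h1.trans h5
    rw [Real.norm_eq_abs] at h6
    have h7 : ∀ a b : ℝ, |l - 1/4 * a - (l - 1/4 * b)| = 1/4 * |a - b| := by
      intro a b
      rw [show l - 1/4 * a - (l - 1/4 * b) = -(1/4 * (a - b)) by ring, abs_neg, abs_mul,
        abs_of_pos (by norm_num : (0:ℝ) < 1/4)]
    rw [h7]
    push_cast
    have := mul_nonneg hD0 (hepos x).le
    linarith
  have hfix := hT.fixedPoint_isFixedPt
  set w := ContractingWith.fixedPoint T hT
  refine ⟨fun x => e x * w x, hec.mul w.continuous, ?_⟩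
  intro τ hτ
  have h1 : N w τ = w τ := by
    have : (T w) τ = w τ := by rw [hfix]
    exact this
  rw [hN] at h1
  simp only [abs_of_nonneg hτ, hA] at h1
  rw [div_eq_iff (hepos τ).ne'] at h1
  simp only
  rw [mul_comm, ← h1]

lemma aux_trunc (p M : ℝ) (hp : 3 < p) (hM : 0 < M) : ∃ φ : ℝ → ℝ, ∃ B L : ℝ, 0 ≤ B ∧ 0 ≤ L ∧
    Continuous φ ∧ (∀ x, |φ x| ≤ B) ∧ (∀ x y, |φ x - φ y| ≤ L * |x - y|) ∧
    ∀ x, |x| ≤ M → φ x = |x| ^ (p-1) * x := by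
  have hd : ∀ x : ℝ, HasDerivAt (fun x : ℝ => |x| ^ (p-1) * x)
      ((p-1) * |x| ^ (p-1-2) * x * x + |x| ^ (p-1) * 1) x := fun x =>
    (hasDerivAt_abs_rpow x (p := p-1) (by linarith)).mul (hasDerivAt_id x)
  have hMM : -M ≤ M := by linarith
  have hLip : ∀ x ∈ Icc (-M) M, ∀ y ∈ Icc (-M) M,
      ‖|y| ^ (p-1) * y - |x| ^ (p-1) * x‖ ≤ ((p-1) * M ^ (p-1-2) * M * M + M ^ (p-1)) * ‖y - x‖ := by
    intro x hx y hy
    refine Convex.norm_image_sub_le_of_norm_hasDerivWithin_le (s := Icc (-M) M)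
      (f := fun x : ℝ => |x| ^ (p-1) * x)
      (fun z _ => (hd z).hasDerivWithinAt) ?_ (convex_Icc _ _) hx hy
    intro z hz
    have hz' : |z| ≤ M := abs_le.2 hz
    rw [Real.norm_eq_abs]
    refine (abs_add_le _ _).trans ?_
    rw [abs_mul, abs_mul, abs_mul, abs_mul, abs_one, mul_one,
      abs_of_nonneg (Real.rpow_nonneg (abs_nonneg z) _),
      abs_of_nonneg (Real.rpow_nonneg (abs_nonneg z) _), abs_of_pos (by linarith : 0 < p - 1)]
    have h1 : |z| ^ (p-1-2) ≤ M ^ (p-1-2) := Real.rpow_le_rpow (abs_nonneg _) hz' (by linarith)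
    have h2 : |z| ^ (p-1) ≤ M ^ (p-1) := Real.rpow_le_rpow (abs_nonneg _) hz' (by linarith)
    have : 0 ≤ p - 1 := by linarith
    have := abs_nonneg z
    gcongr
  have hcont : Continuous (fun x : ℝ => |x| ^ (p-1) * x) :=
    continuous_iff_continuousAt.2 fun x => (hd x).continuousAt
  refine ⟨fun x => |(projIcc (-M) M hMM x : ℝ)| ^ (p-1) * (projIcc (-M) M hMM x : ℝ),
    M ^ (p-1) * M, (p-1) * M ^ (p-1-2) * M * M + M ^ (p-1), by positivity, ?_, ?_, ?_, ?_, ?_⟩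
  · have : 0 ≤ p - 1 := by linarith
    positivity
  · exact hcont.comp (continuous_subtype_val.comp continuous_projIcc)
  · intro x
    have hz' : |(projIcc (-M) M hMM x : ℝ)| ≤ M := abs_le.2 (projIcc (-M) M hMM x).2
    rw [abs_mul, abs_of_nonneg (Real.rpow_nonneg (abs_nonneg _) _)]
    have : 0 ≤ p - 1 := by linarith
    gcongr
  · intro x y
    refine (hLip _ (projIcc (-M) M hMM y).2 _ (projIcc (-M) M hMM x).2).trans ?_
    have h1 := (LipschitzWith.projIcc hMM).dist_le_mul x y
    rw [Subtype.dist_eq, Real.dist_eq, Real.dist_eq] at h1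
    have : 0 ≤ p - 1 := by linarith
    gcongr
    simpa using h1
  · intro x hx
    have := projIcc_of_mem hMM (abs_le.1 hx : x ∈ Icc (-M) M)
    simp only [this]

lemma aux_sol (p l : ℝ) (hp : 3 < p) (hl : l ≠ 0) : ∃ h v : ℝ → ℝ, ∃ B : ℝ, 0 ≤ B ∧
    Continuous h ∧ Continuous v ∧ v 0 = l ∧
    (∀ τ, 0 < τ → HasDerivAt h ((v τ - h τ) / τ) τ) ∧
    (∀ τ, 0 < τ → HasDerivAt v (-(1/4) * (τ ^ (p-3) * (|h τ| ^ (p-1) * h τ))) τ) ∧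
    (∀ τ, 0 ≤ τ → |h τ| ≤ |l| ∧ |v τ| ≤ |l|) ∧
    (∀ τ, 0 ≤ τ → |h τ - l| ≤ B * τ ^ (p-2)) := by
  have hl0 : 0 < |l| := abs_pos.2 hl
  obtain ⟨φ, B, L, hB, hL, hφc, hφB, hφL, hφ⟩ := aux_trunc p (2 * |l|) hp (by linarith)
  obtain ⟨v, hvc, hv⟩ := aux_fix (p-3) l B L (by linarith) hB hL φ hφc hφB hφL
  obtain ⟨h, hh⟩ : ∃ h : ℝ → ℝ, h = fun σ => ∫ θ in (0:ℝ)..1, v (σ * θ) := ⟨_, rfl⟩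
  have hhc : Continuous h := by
    rw [hh]
    apply intervalIntegral.continuous_parametric_intervalIntegral_of_continuous'
    simp only [Function.uncurry_def]
    fun_prop
  have hv' : ∀ τ, 0 ≤ τ → v τ = l - (1/4) * ∫ σ in (0:ℝ)..τ, σ ^ (p-3) * φ (h σ) := by
    rw [hh]; exact hv
  have hv0 : v 0 = l := by rw [hv' 0 le_rfl]; simp
  have hh0 : h 0 = l := by rw [hh]; simp [hv0]
  have hIc : Continuous fun σ => σ ^ (p-3) * φ (h σ) :=
    (Real.continuous_rpow_const (by linarith)).mul (hφc.comp hhc)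
  have hvd : ∀ τ, 0 < τ → HasDerivAt v (-(1/4) * (τ ^ (p-3) * φ (h τ))) τ := by
    intro τ hτ
    have h1 := ((hIc.integral_hasStrictDerivAt 0 τ).hasDerivAt.const_mul (1/4)).const_sub l
    have h2 : v =ᶠ[nhds τ] fun τ => l - (1/4) * ∫ σ in (0:ℝ)..τ, σ ^ (p-3) * φ (h σ) := by
      filter_upwards [Ioi_mem_nhds hτ] with x hx using hv' x (le_of_lt hx)
    refine (h1.congr_of_eventuallyEq h2).congr_deriv (by ring)
  have hhd : ∀ τ, 0 < τ → HasDerivAt h ((v τ - h τ) / τ) τ := by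
    intro τ hτ
    have hg : ∀ x, 0 < x → h x = (∫ σ in (0:ℝ)..x, v σ) / x := by
      intro x hx
      have := intervalIntegral.mul_integral_comp_mul_left (a := 0) (b := 1) (f := v) x
      rw [mul_zero, mul_one] at this
      rw [← this, hh]
      field_simp
    have h1 := ((hvc.integral_hasStrictDerivAt 0 τ).hasDerivAt).div (hasDerivAt_id τ) hτ.ne'
    have h2 : h =ᶠ[nhds τ] fun x => (∫ σ in (0:ℝ)..x, v σ) / x := by
      filter_upwards [Ioi_mem_nhds hτ] with x hx using hg x hx
    refine (h1.congr_of_eventuallyEq h2).congr_deriv ?_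
    rw [hg τ hτ]
    simp only [id]
    field_simp
  -- averages
  have havg : ∀ b c D, 0 ≤ b → (∀ τ ∈ Icc 0 b, |v τ - c| ≤ D) → |h b - c| ≤ D := by
    intro b c D hb hD
    have h1 := intervalIntegral.norm_integral_le_of_norm_le_const (a := 0) (b := 1) (C := D)
      (f := fun θ => v (b * θ) - c) (by
        intro θ hθ
        rw [uIoc_of_le zero_le_one] at hθ
        exact hD _ ⟨mul_nonneg hb hθ.1.le, by nlinarith [hθ.2]⟩)
    rw [intervalIntegral.integral_sub (by apply Continuous.intervalIntegrable; fun_prop)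
      (by apply Continuous.intervalIntegrable; fun_prop)] at h1
    rw [hh]
    simpa using h1
  have hpow : ∀ x : ℝ, |x| ^ (p-1) * x * x = |x| ^ (p+1) := by
    intro x
    rw [mul_assoc, ← abs_mul_abs_self x, ← pow_two, ← Real.rpow_natCast |x| 2,
      ← Real.rpow_add_of_nonneg (abs_nonneg x) (by linarith) (by norm_num)]
    congr 1; push_cast; ring
  have hen : ∀ b, 0 ≤ b → (∀ τ ∈ Ico 0 b, |h τ| ≤ 2 * |l|) → ∀ τ ∈ Icc 0 b, |v τ| ≤ |l| := by
    intro b hb hbd τ hτ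
    have := antitoneOn_of_hasDerivWithinAt_nonpos (convex_Icc 0 b)
      (f := fun τ => v τ ^ 2 / 2 + 1 / (4 * (p+1)) * (τ ^ (p-2) * |h τ| ^ (p+1)))
      (f' := fun τ => 1/4 * (τ ^ (p-3) * |h τ| ^ (p+1)) * ((p-2)/(p+1) - 1)) ?_ ?_ ?_
    · have h1 := this (left_mem_Icc.2 hb) hτ hτ.1
      simp only at h1
      rw [hv0, Real.zero_rpow (by linarith), zero_mul, mul_zero, add_zero] at h1
      have h2 : 0 ≤ 1 / (4 * (p+1)) * (τ ^ (p-2) * |h τ| ^ (p+1)) := by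
        have := Real.rpow_nonneg hτ.1 (p-2)
        positivity
      apply sq_le_sq.1
      linarith
    · apply Continuous.continuousOn
      refine ((hvc.pow 2).div_const 2).add (continuous_const.mul ?_)
      exact (Real.continuous_rpow_const (by linarith)).mul
        ((Real.continuous_rpow_const (by linarith)).comp hhc.abs)
    · intro x hx
      rw [interior_Icc] at hx
      have hx0 : 0 < x := hx.1
      refine HasDerivAt.hasDerivWithinAt ?_
      have h1 := ((hvd x hx0).pow 2).div_const 2
      have h2 := (hasDerivAt_abs_rpow (h x) (p := p+1) (by linarith)).comp x (hhd x hx0)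
      have h3 := (Real.hasDerivAt_rpow_const (x := x) (p := p-2) (Or.inl hx0.ne')).mul h2
      refine (h1.add (h3.const_mul (1 / (4 * (p+1))))).congr_deriv ?_
      rw [hφ _ (hbd x ⟨hx.1.le, hx.2⟩)]
      simp only [Function.comp]
      rw [← hpow, show p + 1 - 2 = p - 1 by ring, show p - 2 - 1 = p - 3 by ring,
        show p - 2 = (p - 3) + 1 by ring, Real.rpow_add_one hx0.ne']
      have : p + 1 ≠ 0 := by linarith
      push_cast
      field_simp
      ring
    · intro x hx
      rw [interior_Icc] at hx
      have h1 : 0 ≤ x ^ (p-3) := Real.rpow_nonneg hx.1.le _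
      apply mul_nonpos_of_nonneg_of_nonpos
      · positivity
      · rw [sub_nonpos, div_le_one (by linarith)]; linarith
  have hhb : ∀ b, 0 ≤ b → |h b| ≤ |l| := by
    intro b hb
    have hs : Icc 0 b ⊆ {x | |h x| ≤ |l|} := by
      apply IsClosed.Icc_subset_of_forall_mem_nhdsGT_of_Icc_subset
      · exact (isClosed_le hhc.abs continuous_const).inter isClosed_Icc
      · show |h 0| ≤ |l|
        rw [hh0]
      · intro t ht hts
        have h1 : ∀ᶠ x in nhds t, |h x| < 2 * |l| := by
          have : |h t| < 2 * |l| := by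
            have : |h t| ≤ |l| := hts (right_mem_Icc.2 ht.1)
            linarith
          exact hhc.abs.continuousAt.eventually_lt continuousAt_const this
        obtain ⟨ε, hε, h2⟩ := Metric.eventually_nhds_iff.1 h1
        have h3 : Ioo t (t + ε) ∈ nhdsWithin t (Ioi t) := Ioo_mem_nhdsGT (by linarith)
        filter_upwards [h3] with x hx
        have h4 := havg x 0 |l| (by linarith [ht.1, hx.1]) (by
          intro τ hτ
          rw [sub_zero]
          refine hen x (by linarith [ht.1, hx.1]) ?_ τ hτ
          intro y hy
          rcases le_total y t with h5 | h5
          · have : |h y| ≤ |l| := hts ⟨hy.1, h5⟩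
            linarith
          · refine (h2 ?_).le
            rw [Real.dist_eq, abs_of_nonneg (by linarith)]
            linarith [hy.2, hx.2])
        simpa using h4
    exact hs (right_mem_Icc.2 hb)
  have hvb : ∀ τ, 0 ≤ τ → |v τ| ≤ |l| := fun τ hτ =>
    hen τ hτ (fun y hy => by linarith [hhb y hy.1]) τ (right_mem_Icc.2 hτ)
  refine ⟨h, v, B, hB, hhc, hvc, hv0, hhd, ?_, fun τ hτ => ⟨hhb τ hτ, hvb τ hτ⟩, ?_⟩
  · intro τ hτ
    rw [← hφ _ (by linarith [hhb τ hτ.le])]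
    exact hvd τ hτ
  · intro τ hτ
    apply havg τ l _ hτ
    intro x hx
    have h1 := intervalIntegral.norm_integral_le_of_norm_le_const (a := 0) (b := x)
      (C := x ^ (p-3) * B) (f := fun σ => σ ^ (p-3) * φ (h σ)) (by
        intro y hy
        rw [uIoc_of_le hx.1] at hy
        rw [norm_mul, Real.norm_eq_abs, Real.norm_eq_abs,
          abs_of_nonneg (Real.rpow_nonneg hy.1.le _)]
        have := Real.rpow_le_rpow hy.1.le hy.2 (by linarith : 0 ≤ p - 3)
        exact mul_le_mul this (hφB _) (abs_nonneg _) (Real.rpow_nonneg hx.1 _))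
    rw [sub_zero, abs_of_nonneg hx.1, Real.norm_eq_abs] at h1
    have h2 : x ^ (p-3) * B * x = B * x ^ (p-2) := by
      rw [show p - 2 = (p - 3) + 1 by ring, Real.rpow_add_one' hx.1 (by linarith)]
      ring
    have h3 : B * x ^ (p-2) ≤ B * τ ^ (p-2) := by
      have := Real.rpow_le_rpow hx.1 hx.2 (by linarith : 0 ≤ p - 2)
      gcongr
    rw [hv' x hx.1]
    rw [show ∀ I : ℝ, l - 1/4 * I - l = -(1/4 * I) from fun I => by ring, abs_neg, abs_mul,
      abs_of_pos (by norm_num : (0:ℝ) < 1/4)]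
    have := abs_nonneg (∫ σ in (0:ℝ)..x, σ ^ (p-3) * φ (h σ))
    linarith

lemma aux_mono (s₀ : ℝ) (f f' : ℝ → ℝ) (hf : ∀ x, HasDerivAt f (f' x) x)
    (h : ∀ x, s₀ ≤ x → 0 ≤ f' x) : ∀ x, s₀ ≤ x → f s₀ ≤ f x := by
  intro x hx
  have := monotoneOn_of_hasDerivWithinAt_nonneg (convex_Ici s₀) (f := f) (f' := f')
    (fun y _ => (hf y).continuousAt.continuousWithinAt) (fun y _ => (hf y).hasDerivWithinAt)
    (fun y hy => by rw [interior_Ici] at hy; exact h y hy.le)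
  exact this (mem_Ici.2 le_rfl) hx hx

lemma aux_young (p k E : ℝ) (hp : 3 < p) (hk : 0 < k) (hE : 0 < E) :
    ∃ C, 0 ≤ C ∧ ∀ x, 0 ≤ x → k * x ^ (p + 1) ≤ E + C * x ^ (2 * (p - 1)) := by
  obtain ⟨δ, hδ, hδ'⟩ : ∃ δ : ℝ, 0 < δ ∧ k * δ ^ (p+1) = E := by
    refine ⟨(E / k) ^ (1 / (p + 1)), by positivity, ?_⟩
    rw [← Real.rpow_mul (by positivity), one_div_mul_cancel (by linarith), Real.rpow_one]
    field_simp
  refine ⟨k * δ ^ (-(p-3)), by positivity, fun x hx => ?_⟩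
  rcases le_total x δ with h | h
  · have h1 : x ^ (p+1) ≤ δ ^ (p+1) := Real.rpow_le_rpow hx h (by linarith)
    have : 0 ≤ k * δ ^ (-(p-3)) * x ^ (2 * (p-1)) := by positivity
    nlinarith
  · have hx' : 0 < x := by linarith
    have h1 : x ^ (p+1) = x ^ (-(p-3)) * x ^ (2*(p-1)) := by
      rw [← Real.rpow_add hx']; congr 1; ring
    have h2 : x ^ (-(p-3)) ≤ δ ^ (-(p-3)) := Real.rpow_le_rpow_of_nonpos hδ h (by linarith)
    rw [h1]
    have h3 : k * (x ^ (-(p-3)) * x ^ (2*(p-1))) ≤ k * (δ ^ (-(p-3)) * x ^ (2*(p-1))) := by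
      gcongr
    linarith

lemma aux_blow (p a b c : ℝ) (hp : 3 < p) (hb : 0 ≤ b) (hc : 0 ≤ c) (w w1 J : ℝ → ℝ)
    (hw : ∀ s, HasDerivAt w (w1 s) s)
    (hw1 : ∀ s, HasDerivAt w1 (c * w1 s + b * w s - |w s| ^ (p-1) * w s) s)
    (hJ : ∀ s, HasDerivAt J (|w s| ^ (2 * (p-1))) s)
    (hJB : ∀ s, 0 ≤ s → J s ≤ a)
    (s₁ : ℝ) (hE : 0 < w1 s₁ ^ 2 / 2 - b * w s₁ ^ 2 / 2 + |w s₁| ^ (p+1) / (p+1)) :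
    False := by
  have hpow : ∀ x : ℝ, |x| ^ (p-1) * x * x = |x| ^ (p+1) := by
    intro x
    rw [mul_assoc, ← abs_mul_abs_self x, ← pow_two, ← Real.rpow_natCast |x| 2,
      ← Real.rpow_add_of_nonneg (abs_nonneg x) (by linarith) (by norm_num)]
    congr 1; push_cast; ring
  obtain ⟨E, hEd⟩ : ∃ E : ℝ → ℝ, E = fun s => w1 s ^ 2 / 2 - b * w s ^ 2 / 2 + |w s| ^ (p+1) / (p+1) :=
    ⟨_, rfl⟩
  have hE' : ∀ s, HasDerivAt E (c * w1 s ^ 2) s := by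
    intro s
    rw [hEd]
    have h1 := (((hw1 s).pow 2).div_const 2).sub ((((hw s).pow 2).const_mul b).div_const 2)
    have h2 := ((hasDerivAt_abs_rpow (w s) (p := p+1) (by linarith)).comp s (hw s)).div_const (p+1)
    refine (h1.add h2).congr_deriv ?_
    have : p + 1 ≠ 0 := by linarith
    rw [show p + 1 - 2 = p - 1 by ring]
    field_simp
    push_cast
    ring
  have hEm : ∀ x, s₁ ≤ x → E s₁ ≤ E x := aux_mono s₁ E _ hE' (fun x _ => by positivity)
  set E0 := E s₁ with hE0
  have hE0p : 0 < E0 := by rw [hE0, hEd]; exact hE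
  obtain ⟨C, hC, hY⟩ := aux_young p (1 + 2 / (p+1)) E0 hp (by positivity) hE0p
  -- first monotone quantity
  have hF := aux_mono s₁ (fun s => w s * w1 s - c * w s ^ 2 / 2 - E0 * s + C * J s)
    (fun s => (2 * E s + 2 * b * w s ^ 2 - (1 + 2/(p+1)) * |w s| ^ (p+1)) - E0
      + C * |w s| ^ (2 * (p-1)))
    (by
      intro s
      have h := ((((hw s).mul (hw1 s)).sub ((((hw s).pow 2).const_mul c).div_const 2)).sub
        ((hasDerivAt_id s).const_mul E0)).add ((hJ s).const_mul C)
      refine h.congr_deriv ?_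
      have h3 : w s * (c * w1 s + b * w s - |w s| ^ (p-1) * w s)
        = c * w s * w1 s + b * w s ^ 2 - |w s| ^ (p+1) := by rw [← hpow]; ring
      rw [h3, hEd]
      have : p + 1 ≠ 0 := by linarith
      field_simp
      push_cast
      ring)
    (by
      intro s hs
      have h1 := hEm s hs
      have h2 := hY |w s| (abs_nonneg _)
      have h3 : 0 ≤ 2 * b * w s ^ 2 := by positivity
      linarith)
  set F0 := w s₁ * w1 s₁ - c * w s₁ ^ 2 / 2 - E0 * s₁ + C * J s₁
  obtain ⟨s₂, hs₂, hs₂', hs₂0⟩ : ∃ s₂, s₁ ≤ s₂ ∧ 1 ≤ F0 + E0 * s₂ - C * a ∧ 0 ≤ s₂ := by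
    refine ⟨max (max s₁ ((1 - F0 + C * a) / E0)) 0, (le_max_left _ _).trans (le_max_left _ _), ?_, le_max_right _ _⟩
    have : (1 - F0 + C * a) / E0 ≤ max (max s₁ ((1 - F0 + C * a) / E0)) 0 :=
      (le_max_right _ _).trans (le_max_left _ _)
    rw [div_le_iff₀ hE0p] at this
    linarith
  have hG := aux_mono s₂ (fun s => w s ^ 2 / 2 - s) (fun s => w s * w1 s - 1)
    (by
      intro s
      refine ((((hw s).pow 2).div_const 2).sub (hasDerivAt_id s)).congr_deriv ?_
      push_cast
      ring)
    (by
      intro s hs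
      have h1 := hF s (hs₂.trans hs)
      have h2 := mul_le_mul_of_nonneg_left (hJB s (hs₂0.trans hs)) hC
      have h3 : 0 ≤ c * w s ^ 2 / 2 := by positivity
      have h4 : E0 * s₂ ≤ E0 * s := by gcongr
      linarith)
  have hH := aux_mono (s₂ + 1) (fun s => J s - s) (fun s => |w s| ^ (2 * (p-1)) - 1)
    (fun s => (hJ s).sub (hasDerivAt_id s))
    (by
      intro s hs
      have h1 := hG s (by linarith)
      have h2 : 1 ≤ |w s| := by
        rw [← sq_le_sq₀ zero_le_one (abs_nonneg _), sq_abs]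
        nlinarith [sq_nonneg (w s₂)]
      have := Real.one_le_rpow h2 (z := 2 * (p-1)) (by linarith)
      linarith)
  have h1 := hH (s₂ + 1 + |a - J (s₂ + 1)| + 1) (by linarith [abs_nonneg (a - J (s₂ + 1))])
  have h2 := hJB (s₂ + 1 + |a - J (s₂ + 1)| + 1) (by linarith [abs_nonneg (a - J (s₂ + 1))])
  linarith [le_abs_self (a - J (s₂ + 1))]

lemma aux_pos (p b c : ℝ) (hp : 3 < p) (hc : 0 < c) (w w1 : ℝ → ℝ)
    (hw : ∀ s, HasDerivAt w (w1 s) s)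
    (hw1 : ∀ s, HasDerivAt w1 (c * w1 s + b * w s - |w s| ^ (p-1) * w s) s)
    (hwt : Filter.Tendsto w Filter.atBot (nhds 0))
    (hw1t : Filter.Tendsto w1 Filter.atBot (nhds 0))
    (hne : ∃ s, w s ≠ 0) :
    ∃ s₁, 0 < w1 s₁ ^ 2 / 2 - b * w s₁ ^ 2 / 2 + |w s₁| ^ (p+1) / (p+1) := by
  by_contra! hcon
  obtain ⟨E, hEd⟩ : ∃ E : ℝ → ℝ, E = fun s => w1 s ^ 2 / 2 - b * w s ^ 2 / 2 + |w s| ^ (p+1) / (p+1) :=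
    ⟨_, rfl⟩
  have hE' : ∀ s, HasDerivAt E (c * w1 s ^ 2) s := by
    intro s
    rw [hEd]
    have h1 := (((hw1 s).pow 2).div_const 2).sub ((((hw s).pow 2).const_mul b).div_const 2)
    have h2 := ((hasDerivAt_abs_rpow (w s) (p := p+1) (by linarith)).comp s (hw s)).div_const (p+1)
    refine (h1.add h2).congr_deriv ?_
    have : p + 1 ≠ 0 := by linarith
    rw [show p + 1 - 2 = p - 1 by ring]
    field_simp
    push_cast
    ring
  have hEm : Monotone E := monotone_of_hasDerivAt_nonneg hE' (fun s => by positivity)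
  have hEt : Filter.Tendsto E Filter.atBot (nhds 0) := by
    have h1 := ((Real.continuous_rpow_const (q := p+1) (by linarith)).tendsto |0|).comp hwt.abs
    have h2 := (((hw1t.pow 2).div_const 2).sub (((hwt.pow 2).const_mul b).div_const 2)).add
      (h1.div_const (p+1))
    rw [hEd]
    rw [abs_zero, Real.zero_rpow (by linarith)] at h2
    simpa [Function.comp_def] using h2
  have hE0 : ∀ s, E s = 0 := fun s => le_antisymm (by rw [hEd]; exact hcon s)
    (hEm.le_of_tendsto hEt s)
  have hw10 : ∀ s, w1 s = 0 := by
    intro s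
    have h1 := hE' s
    rw [show E = fun _ => 0 from funext hE0] at h1
    have h2 := h1.unique (hasDerivAt_const s (0:ℝ))
    have := hc.ne'
    simpa [this] using h2
  have hwc : ∀ x y, w x = w y := is_const_of_deriv_eq_zero (fun s => (hw s).differentiableAt)
    (fun s => by rw [(hw s).deriv, hw10])
  obtain ⟨s, hs⟩ := hne
  apply hs
  have h1 : Filter.Tendsto w Filter.atBot (nhds (w s)) := by
    rw [show w = fun _ => w s from funext fun x => hwc x s]
    exact tendsto_const_nhds
  exact tendsto_nhds_unique h1 hwt

/-- existence of singular stationary solutions `Z_l` of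
`ΔZ + |Z|^{p-1}Z = 0` on `ℝ⁴ \ {0}` (in radial form), with asymptotics
`r²Z(r) = l + O(r^{4-2p})`, failing to lie in `L^{2(p-1)}(ℝ⁴)`. -/
theorem stmt0 (p : ℝ) (hp : 3 < p) (l : ℝ) (hl : l ≠ 0) :
    ∃ Z : ℝ → ℝ,
      ContDiffOn ℝ 2 Z (Ioi (0:ℝ)) ∧
      (∀ r : ℝ, 0 < r →
        deriv (deriv Z) r + (3 / r) * deriv Z r + |Z r| ^ (p - 1) * Z r = 0) ∧
      (∃ C > (0:ℝ), ∃ r₀ > (0:ℝ), ∀ r : ℝ, r₀ ≤ r →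
        |r ^ 2 * Z r - l| ≤ C * r ^ (4 - 2 * p)) ∧
      (∫⁻ r in Ioi (0:ℝ), ENNReal.ofReal (|Z r| ^ (2 * (p - 1)) * r ^ 3)) = ⊤ := by
  obtain ⟨h, v, B, hB, hhc, hvc, hv0, hhd, hvd, hbd, hhl⟩ := aux_sol p l hp hl
  obtain ⟨Z, hZ⟩ : ∃ Z : ℝ → ℝ, Z = fun r => h ((r ^ 2)⁻¹) / r ^ 2 := ⟨_, rfl⟩
  have hτd : ∀ r : ℝ, 0 < r → HasDerivAt (fun r : ℝ => (r ^ 2)⁻¹) (-2 / r ^ 3) r := by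
    intro r hr
    refine (((hasDerivAt_id r).pow 2).inv (by simp; positivity)).congr_deriv ?_
    simp only [Pi.pow_apply, id]
    field_simp
    push_cast
    ring
  have hZd : ∀ r, 0 < r → HasDerivAt Z (-2 * v ((r ^ 2)⁻¹) / r ^ 3) r := by
    intro r hr
    rw [hZ]
    have h1 := ((hhd ((r^2)⁻¹) (by positivity)).comp r (hτd r hr)).div ((hasDerivAt_id r).pow 2)
      (by simp; positivity)
    refine h1.congr_deriv ?_
    simp only [Function.comp, Pi.pow_apply, id]
    field_simp
    push_cast
    ring
  have hZd' : ∀ r, 0 < r → deriv Z r = -2 * v ((r ^ 2)⁻¹) / r ^ 3 := fun r hr => (hZd r hr).deriv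
  have hnl : ∀ r, 0 < r → ((r^2)⁻¹) ^ (p-3) * (|h ((r^2)⁻¹)| ^ (p-1) * h ((r^2)⁻¹)) / r ^ 6
      = |Z r| ^ (p-1) * Z r := by
    intro r hr
    rw [hZ]
    simp only
    rw [abs_div, Real.div_rpow (abs_nonneg _) (abs_nonneg _), abs_of_pos (by positivity : 0 < r^2),
      Real.inv_rpow (by positivity), show p - 1 = p - 3 + 2 by ring,
      Real.rpow_add (by positivity : 0 < r ^ 2) (p-3) 2, Real.rpow_two]
    have : 0 < (r^2) ^ (p-3) := by positivity
    field_simp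
  have hZdd : ∀ r, 0 < r → HasDerivAt (deriv Z) (-(3 / r) * deriv Z r - |Z r| ^ (p-1) * Z r) r := by
    intro r hr
    have h1 := (((hvd ((r^2)⁻¹) (by positivity)).comp r (hτd r hr)).const_mul (-2)).div
      ((hasDerivAt_id r).pow 3) (by simp; positivity)
    have h2 : deriv Z =ᶠ[nhds r] fun r => -2 * v ((r ^ 2)⁻¹) / r ^ 3 := by
      filter_upwards [Ioi_mem_nhds hr] with x hx using hZd' x hx
    refine (h1.congr_of_eventuallyEq h2).congr_deriv ?_
    rw [hZd' r hr, ← hnl r hr]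
    simp only [Function.comp, Pi.pow_apply, id]
    field_simp
    push_cast
    ring
  have hψc : Continuous (fun x : ℝ => |x| ^ (p-1) * x) :=
    ((Real.continuous_rpow_const (by linarith)).comp continuous_abs).mul continuous_id
  have hZc : ContinuousOn Z (Ioi 0) := fun r hr => (hZd r hr).continuousAt.continuousWithinAt
  have hZ'c : ContinuousOn (deriv Z) (Ioi 0) :=
    fun r hr => (hZdd r hr).continuousAt.continuousWithinAt
  refine ⟨Z, ?_, ?_, ?_, ?_⟩
  · rw [show (2 : WithTop ℕ∞) = 1 + 1 by norm_num, contDiffOn_succ_iff_deriv_of_isOpen isOpen_Ioi]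
    refine ⟨fun r hr => (hZd r hr).differentiableAt.differentiableWithinAt, by simp, ?_⟩
    rw [show (1 : WithTop ℕ∞) = 0 + 1 by norm_num, contDiffOn_succ_iff_deriv_of_isOpen isOpen_Ioi]
    refine ⟨fun r hr => (hZdd r hr).differentiableAt.differentiableWithinAt, by simp, ?_⟩
    rw [contDiffOn_zero]
    have : ContinuousOn (fun r => -(3 / r) * deriv Z r - |Z r| ^ (p-1) * Z r) (Ioi 0) := by
      refine ContinuousOn.sub (ContinuousOn.mul (ContinuousOn.neg ?_) hZ'c) (hψc.comp_continuousOn hZc)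
      exact continuousOn_const.div continuousOn_id (fun x hx => (ne_of_gt hx))
    exact this.congr (fun r hr => (hZdd r hr).deriv)
  · intro r hr
    rw [(hZdd r hr).deriv]
    ring
  · refine ⟨B + 1, by linarith, 1, one_pos, ?_⟩
    intro r hr
    have hr0 : 0 < r := by linarith
    have h1 := hhl ((r^2)⁻¹) (by positivity)
    have h2 : r ^ 2 * Z r = h ((r^2)⁻¹) := by
      rw [hZ]; field_simp
    have h3 : ((r^2)⁻¹) ^ (p-2) = r ^ (4 - 2 * p) := by
      rw [← Real.rpow_natCast r 2, ← Real.rpow_neg hr0.le, ← Real.rpow_mul hr0.le]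
      congr 1; push_cast; ring
    rw [h2, ← h3]
    have : 0 ≤ ((r^2)⁻¹) ^ (p-2) := by positivity
    linarith
  · by_contra hfin
    obtain ⟨f, hf⟩ : ∃ f : ℝ → ℝ, f = fun r => |Z r| ^ (2 * (p-1)) * r ^ 3 := ⟨_, rfl⟩
    have hfc : ContinuousOn f (Ioi 0) := by
      rw [hf]
      refine ContinuousOn.mul ?_ (continuousOn_id.pow 3)
      exact (Real.continuous_rpow_const (q := 2 * (p-1)) (by linarith)).comp_continuousOn hZc.abs
    have hfnn : ∀ r ∈ Ioi (0:ℝ), 0 ≤ f r := by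
      intro r hr
      rw [hf]
      have : (0:ℝ) < r := hr
      positivity
    have hfae : 0 ≤ᵐ[volume.restrict (Ioi (0:ℝ))] f :=
      (ae_restrict_iff' measurableSet_Ioi).2 (Filter.Eventually.of_forall hfnn)
    have hfi : IntegrableOn f (Ioi 0) := by
      refine ⟨hfc.aestronglyMeasurable measurableSet_Ioi, ?_⟩
      rw [hasFiniteIntegral_iff_ofReal hfae, hf]
      exact lt_top_iff_ne_top.2 hfin
    have hfii : ∀ x y : ℝ, 0 < x → 0 < y → IntervalIntegrable f volume x y := by
      intro x y hx hy
      apply (hfc.mono _).intervalIntegrable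
      intro z hz
      exact lt_of_lt_of_le (lt_min hx hy) hz.1
    obtain ⟨a, ha⟩ : ∃ a, a = 2 / (p-1) := ⟨_, rfl⟩
    have hp1 : 0 < p - 1 := by linarith
    have ha' : a * (p-1) = 2 := by rw [ha]; field_simp
    have ha0 : 0 < a := by rw [ha]; positivity
    have ha1 : a < 1 := by rw [ha, div_lt_one hp1]; linarith
    obtain ⟨w, hw⟩ : ∃ w : ℝ → ℝ, w = fun s => Real.exp ((2-a) * s) * h (Real.exp (2 * s)) := ⟨_, rfl⟩
    obtain ⟨w1, hw1⟩ : ∃ w1 : ℝ → ℝ, w1 = fun s => Real.exp ((2-a) * s) *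
      (2 * v (Real.exp (2 * s)) - a * h (Real.exp (2 * s))) := ⟨_, rfl⟩
    have hed : ∀ k s : ℝ, HasDerivAt (fun s => Real.exp (k * s)) (Real.exp (k * s) * k) s := by
      intro k s
      simpa using ((hasDerivAt_id s).const_mul k).exp
    have hhcd : ∀ s, HasDerivAt (fun s => h (Real.exp (2 * s)))
        (2 * (v (Real.exp (2 * s)) - h (Real.exp (2 * s)))) s := by
      intro s
      refine ((hhd _ (Real.exp_pos (2 * s))).comp s (hed 2 s)).congr_deriv ?_
      have := Real.exp_pos (2 * s)
      field_simp
    have hvcd : ∀ s, HasDerivAt (fun s => v (Real.exp (2 * s)))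
        (-(1/2) * (Real.exp ((2 * (p-2)) * s) * (|h (Real.exp (2*s))| ^ (p-1) * h (Real.exp (2*s))))) s := by
      intro s
      refine ((hvd _ (Real.exp_pos (2 * s))).comp s (hed 2 s)).congr_deriv ?_
      rw [← Real.exp_mul, show 2 * (p-2) * s = 2 * s * (p-3) + 2 * s by ring, Real.exp_add]
      ring
    have hwd : ∀ s, HasDerivAt w (w1 s) s := by
      intro s
      rw [hw, hw1]
      refine ((hed (2-a) s).mul (hhcd s)).congr_deriv ?_
      ring
    have hw1d : ∀ s, HasDerivAt w1 ((2-2*a) * w1 s + (a*(2-a)) * w s - |w s| ^ (p-1) * w s) s := by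
      intro s
      have h0 : |w s| ^ (p-1) * w s = Real.exp ((2-a) * s) * (Real.exp ((2 * (p-2)) * s) *
          (|h (Real.exp (2*s))| ^ (p-1) * h (Real.exp (2*s)))) := by
        rw [hw]
        simp only
        rw [abs_mul, Real.abs_exp, Real.mul_rpow (Real.exp_pos _).le (abs_nonneg _),
          ← Real.exp_mul, show (2-a) * s * (p-1) = 2 * (p-2) * s by linear_combination (-s) * ha']
        ring
      rw [h0, hw, hw1]
      refine ((hed (2-a) s).mul (((hvcd s).const_mul 2).sub ((hhcd s).const_mul a))).congr_deriv ?_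
      simp only [Pi.sub_apply]
      ring
    have het : ∀ k : ℝ, 0 < k → Filter.Tendsto (fun s => Real.exp (k * s)) Filter.atBot (nhds 0) := by
      intro k hk
      exact Real.tendsto_exp_atBot.comp (Filter.tendsto_id.const_mul_atBot hk)
    have hht : Filter.Tendsto (fun s => h (Real.exp (2 * s))) Filter.atBot (nhds (h 0)) :=
      (hhc.tendsto 0).comp (het 2 two_pos)
    have hvt : Filter.Tendsto (fun s => v (Real.exp (2 * s))) Filter.atBot (nhds (v 0)) :=
      (hvc.tendsto 0).comp (het 2 two_pos)
    have hwt : Filter.Tendsto w Filter.atBot (nhds 0) := by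
      have := (het (2-a) (by linarith)).mul hht
      rw [zero_mul] at this
      rw [hw]; exact this
    have hw1t : Filter.Tendsto w1 Filter.atBot (nhds 0) := by
      have := (het (2-a) (by linarith)).mul ((hvt.const_mul 2).sub (hht.const_mul a))
      rw [zero_mul] at this
      rw [hw1]; exact this
    have hh0 : h 0 = l := by
      have := hhl 0 le_rfl
      rw [Real.zero_rpow (by linarith), mul_zero] at this
      exact sub_eq_zero.1 (abs_nonpos_iff.1 this)
    have hne : ∃ s, w s ≠ 0 := by
      by_contra! hcon
      apply hl
      have h1 : (fun s => h (Real.exp (2 * s))) = fun _ => 0 := by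
        funext s
        have := hcon s
        rw [hw] at this
        simpa using this
      rw [h1, hh0] at hht
      exact tendsto_nhds_unique hht tendsto_const_nhds
    obtain ⟨s₁, hs₁⟩ := aux_pos p (a*(2-a)) (2-2*a) hp (by linarith) w w1 hwd hw1d hwt hw1t hne
    refine aux_blow p (∫ r in Ioi 0, f r) (a*(2-a)) (2-2*a) hp (by nlinarith) (by linarith) w w1
      (fun s => - ∫ r in (1:ℝ)..Real.exp (-1 * s), f r) hwd hw1d ?_ ?_ s₁ hs₁
    · intro s
      have hpos := Real.exp_pos (-1 * s)
      have h1 := intervalIntegral.integral_hasDerivAt_right (hfii 1 _ one_pos hpos)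
        (hfc.stronglyMeasurableAtFilter isOpen_Ioi _ hpos) (hfc.continuousAt (Ioi_mem_nhds hpos))
      refine ((h1.comp s (hed (-1) s)).neg).congr_deriv ?_
      have h2 : ((Real.exp (-1 * s)) ^ 2)⁻¹ = Real.exp (2 * s) := by
        rw [← Real.exp_nat_mul, ← Real.exp_neg]; congr 1; push_cast; ring
      have h3 : Z (Real.exp (-1 * s)) = h (Real.exp (2 * s)) * Real.exp (2 * s) := by
        rw [hZ]; simp only; rw [div_eq_mul_inv, h2]
      rw [hf, hw]
      simp only
      rw [h3, abs_mul, abs_mul, Real.abs_exp, Real.abs_exp,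
        Real.mul_rpow (abs_nonneg _) (Real.exp_pos _).le,
        Real.mul_rpow (Real.exp_pos _).le (abs_nonneg _), ← Real.exp_mul, ← Real.exp_mul,
        ← Real.exp_nat_mul]
      have h4 : (2 - a) * s * (2 * (p-1)) = 2 * s * (2 * (p-1)) + ((3:ℕ) * (-1 * s) + -1 * s) := by
        push_cast
        linear_combination (-2 * s) * ha'
      rw [h4, Real.exp_add (2 * s * (2 * (p-1))), Real.exp_add ((3:ℕ) * (-1 * s))]
      ring
    · intro s hs
      have hle : Real.exp (-1 * s) ≤ 1 := Real.exp_le_one_iff.2 (by linarith)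
      rw [← intervalIntegral.integral_symm, intervalIntegral.integral_of_le hle]
      apply setIntegral_mono_set hfi hfae
      apply Filter.Eventually.of_forall
      intro x hx
      exact (Real.exp_pos _).trans hx.1
end

section
/- Fix an odd integer p ≥ 5. There exist constants δ₀ > 0 and C > 0, depending only on p, with the following property. Let R > 0 and let u be an exterior solution on {r > R + |t|} with data (u₀, u₁) satisfying ‖(u₀,u₁)‖_{H(R)} ≤ δ₀ · R^{(p−3)/(p−1)}, and suppose that the three quantities ‖u‖_{L²L⁸(R)}, ‖u‖_{L³L⁶(R)}, and sup_{t∈ℝ} ‖(u(t,·), ∂_t u(t,·))‖_{H(R+|t|)} are all finite. Then ‖u‖_{L²L⁸(R)} + ‖u‖_{L³L⁶(R)} + sup_{t∈ℝ} ‖(u(t,·), ∂_t u(t,·))‖_{H(R+|t|)} ≤ C · ‖(u₀,u₁)‖_{H(R)}. -/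
open MeasureTheory Filter Set
open scoped ENNReal

/-- The exterior energy norm `‖(v,w)‖_{H(R)} = (∫_R^∞ (|v'|² + |w|²) r³ dr)^{1/2}`. -/
noncomputable def eH (R : ℝ) (v w : ℝ → ℝ) : ℝ≥0∞ :=
  ((∫⁻ r in Ioi R, ENNReal.ofReal ((deriv v r) ^ 2 * r ^ 3)) +
      ∫⁻ r in Ioi R, ENNReal.ofReal ((w r) ^ 2 * r ^ 3)) ^ (1 / 2 : ℝ)

/-- The exterior spacetime norm `‖u‖_{L^aL^b(R)}` over the region `{r > R + |t|}`. -/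
noncomputable def eLL (a b R : ℝ) (u : ℝ → ℝ → ℝ) : ℝ≥0∞ :=
  (∫⁻ t : ℝ,
      (∫⁻ r in Ioi (R + |t|), ENNReal.ofReal (|u t r| ^ b * r ^ 3)) ^ (a / b)) ^ (1 / a)

/-- The time derivative `∂_t u` of a function of `(t,r)`. -/
noncomputable def dtu (u : ℝ → ℝ → ℝ) (t r : ℝ) : ℝ := deriv (fun s => u s r) t

/-- `u` is an exterior solution of `∂_t²u - ∂_r²u - (3/r)∂_r u = |u|^{p-1}u`
on `{r > R + |t|}`, of smoothness class `C^n`. -/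
def IsExtSol (p : ℕ) (n : ℕ∞) (R : ℝ) (u : ℝ → ℝ → ℝ) : Prop :=
  ContDiffOn ℝ n (fun q : ℝ × ℝ => u q.1 q.2) {q : ℝ × ℝ | R + |q.1| < q.2} ∧
  ∀ t r : ℝ, R + |t| < r →
    deriv (fun s => dtu u s r) t - deriv (deriv (u t)) r - (3 / r) * deriv (u t) r
      = |u t r| ^ (p - 1) * u t r

/-- The exterior energy of `u` outside `{r > R + |t|}` vanishes as `t → ±∞`. -/
def ExtEnergyVanishes (R : ℝ) (u : ℝ → ℝ → ℝ) : Prop :=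
  Tendsto (fun t : ℝ => ∫ r in Ioi (R + |t|),
      ((dtu u t r) ^ 2 + (deriv (u t) r) ^ 2) * r ^ 3) atTop (nhds 0) ∧
  Tendsto (fun t : ℝ => ∫ r in Ioi (R + |t|),
      ((dtu u t r) ^ 2 + (deriv (u t) r) ^ 2) * r ^ 3) atBot (nhds 0)

/-- `sup_{t∈ℝ} ‖(u(t,·), ∂_t u(t,·))‖_{H(R+|t|)}`. -/
noncomputable def supH (R : ℝ) (u : ℝ → ℝ → ℝ) : ℝ≥0∞ :=
  ⨆ t : ℝ, eH (R + |t|) (u t) (fun r => dtu u t r)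

lemma ae_rect_int {s T a b : ℝ} {N : ℝ → ℝ → ℝ}
    (hN : ContinuousOn (fun q : ℝ × ℝ => N q.1 q.2) (Icc s T ×ˢ Icc a b)) :
    Integrable (Function.uncurry N)
      ((volume.restrict (Ioc s T)).prod (volume.restrict (Ioc a b))) := by
  rw [Measure.prod_restrict, ← Measure.volume_eq_prod]
  have : IntegrableOn (fun q : ℝ × ℝ => N q.1 q.2) (Icc s T ×ˢ Icc a b) volume :=
    hN.integrableOn_compact (isCompact_Icc.prod isCompact_Icc)
  exact this.mono_set (prod_mono Ioc_subset_Icc_self Ioc_subset_Icc_self)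

lemma rect_int_integrable {s T a b : ℝ} (hsT : s ≤ T) (hab : a ≤ b) {N : ℝ → ℝ → ℝ}
    (hN : ContinuousOn (fun q : ℝ × ℝ => N q.1 q.2) (Icc s T ×ˢ Icc a b)) :
    IntervalIntegrable (fun τ => ∫ ξ in a..b, N τ ξ) volume s T := by
  rw [intervalIntegrable_iff_integrableOn_Ioc_of_le hsT]
  have := (ae_rect_int hN).integral_prod_left
  simpa [intervalIntegral.integral_of_le hab, IntegrableOn, Function.uncurry] using this

lemma rect_slice {s T a b : ℝ} {N : ℝ → ℝ → ℝ}
    (hN : ContinuousOn (fun q : ℝ × ℝ => N q.1 q.2) (Icc s T ×ˢ Icc a b)) {τ : ℝ}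
    (hτ : τ ∈ Icc s T) : ContinuousOn (N τ) (Icc a b) := by
  have : ContinuousOn (fun ξ : ℝ => ((τ, ξ) : ℝ × ℝ)) (Icc a b) := by fun_prop
  exact hN.comp this (fun ξ hξ => ⟨hτ, hξ⟩)

lemma rect_slice' {s T a b : ℝ} {N : ℝ → ℝ → ℝ}
    (hN : ContinuousOn (fun q : ℝ × ℝ => N q.1 q.2) (Icc s T ×ˢ Icc a b)) {ξ : ℝ}
    (hξ : ξ ∈ Icc a b) : ContinuousOn (fun τ => N τ ξ) (Icc s T) := by
  have : ContinuousOn (fun τ : ℝ => ((τ, ξ) : ℝ × ℝ)) (Icc s T) := by fun_prop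
  exact hN.comp this (fun τ hτ => ⟨hτ, hξ⟩)

lemma rect_ineq {s T a b : ℝ} (hsT : s ≤ T) (hab : a ≤ b) (W Wt Y Yx N : ℝ → ℝ → ℝ)
    (hW : ∀ τ ∈ Icc s T, ∀ ξ ∈ Icc a b, HasDerivAt (fun τ' => W τ' ξ) (Wt τ ξ) τ)
    (hY : ∀ τ ∈ Icc s T, ∀ ξ ∈ Icc a b, HasDerivAt (Y τ) (Yx τ ξ) ξ)
    (hWc : ContinuousOn (fun q : ℝ × ℝ => W q.1 q.2) (Icc s T ×ˢ Icc a b))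
    (hWtc : ContinuousOn (fun q : ℝ × ℝ => Wt q.1 q.2) (Icc s T ×ˢ Icc a b))
    (hYxc : ContinuousOn (fun q : ℝ × ℝ => Yx q.1 q.2) (Icc s T ×ˢ Icc a b))
    (hNc : ContinuousOn (fun q : ℝ × ℝ => N q.1 q.2) (Icc s T ×ˢ Icc a b))
    (hbd : ∀ τ ∈ Icc s T, Y τ b ≤ Y τ a)
    (hle : ∀ τ ∈ Icc s T, ∀ ξ ∈ Icc a b, Wt τ ξ - Yx τ ξ ≤ N τ ξ) :
    (∫ ξ in a..b, W T ξ) - (∫ ξ in a..b, W s ξ) ≤ ∫ τ in s..T, ∫ ξ in a..b, N τ ξ := by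
  have hs : s ∈ Icc s T := ⟨le_rfl, hsT⟩
  have hT : T ∈ Icc s T := ⟨hsT, le_rfl⟩
  have h1 : (∫ ξ in a..b, W T ξ) - (∫ ξ in a..b, W s ξ)
      = ∫ ξ in a..b, ∫ τ in s..T, Wt τ ξ := by
    rw [← intervalIntegral.integral_sub ((rect_slice hWc hT).intervalIntegrable_of_Icc hab)
      ((rect_slice hWc hs).intervalIntegrable_of_Icc hab)]
    apply intervalIntegral.integral_congr
    intro ξ hξ
    rw [uIcc_of_le hab] at hξ
    have := intervalIntegral.integral_eq_sub_of_hasDerivAt (a := s) (b := T)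
      (f := fun τ' => W τ' ξ) (f' := fun τ => Wt τ ξ)
      (fun τ hτ => by rw [uIcc_of_le hsT] at hτ; exact hW τ hτ ξ hξ)
      ((rect_slice' hWtc hξ).intervalIntegrable_of_Icc hsT)
    exact this.symm
  have h2 : (∫ ξ in a..b, ∫ τ in s..T, Wt τ ξ) = ∫ τ in s..T, ∫ ξ in a..b, Wt τ ξ := by
    symm
    apply intervalIntegral_intervalIntegral_swap
    rw [uIoc_of_le hsT, uIoc_of_le hab]
    have := ae_rect_int hWtc
    rwa [Measure.prod_restrict, ← Measure.volume_eq_prod] at this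
  rw [h1, h2]
  apply intervalIntegral.integral_mono_on hsT (rect_int_integrable hsT hab hWtc)
    (rect_int_integrable hsT hab hNc)
  intro τ hτ
  have i1 := (rect_slice hWtc hτ).intervalIntegrable_of_Icc (μ := volume) hab
  have i2 := (rect_slice hYxc hτ).intervalIntegrable_of_Icc (μ := volume) hab
  have i3 := (rect_slice hNc hτ).intervalIntegrable_of_Icc (μ := volume) hab
  have h3 : ∫ ξ in a..b, Yx τ ξ = Y τ b - Y τ a :=
    intervalIntegral.integral_eq_sub_of_hasDerivAt
      (fun ξ hξ => by rw [uIcc_of_le hab] at hξ; exact hY τ hτ ξ hξ) i2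
  have h4 : ∫ ξ in a..b, (Wt τ ξ - Yx τ ξ) ≤ ∫ ξ in a..b, N τ ξ :=
    intervalIntegral.integral_mono_on hab (i1.sub i2) i3 (fun ξ hξ => hle τ hτ ξ hξ)
  rw [intervalIntegral.integral_sub i1 i2, h3] at h4
  linarith [hbd τ hτ]

structure ShiftSol (j : ℕ) (R : ℝ) (U P D M Z : ℝ → ℝ → ℝ) : Prop where
  Ut : ∀ t ξ, 0 ≤ t → R < ξ → HasDerivAt (fun s => U s ξ) (P t ξ + D t ξ) t
  Ux : ∀ t ξ, 0 ≤ t → R < ξ → HasDerivAt (U t) (D t ξ) ξ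
  Pt : ∀ t ξ, 0 ≤ t → R < ξ → HasDerivAt (fun s => P s ξ)
    (Z t ξ + 3 / (ξ + t) * D t ξ + U t ξ ^ (2 * j + 5) + M t ξ) t
  Px : ∀ t ξ, 0 ≤ t → R < ξ → HasDerivAt (P t) (M t ξ) ξ
  Dt : ∀ t ξ, 0 ≤ t → R < ξ → HasDerivAt (fun s => D s ξ) (M t ξ + Z t ξ) t
  Dx : ∀ t ξ, 0 ≤ t → R < ξ → HasDerivAt (D t) (Z t ξ) ξ
  Uc : ContinuousOn (fun q : ℝ × ℝ => U q.1 q.2) (Ici 0 ×ˢ Ioi R)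
  Pc : ContinuousOn (fun q : ℝ × ℝ => P q.1 q.2) (Ici 0 ×ˢ Ioi R)
  Dc : ContinuousOn (fun q : ℝ × ℝ => D q.1 q.2) (Ici 0 ×ˢ Ioi R)
  Mc : ContinuousOn (fun q : ℝ × ℝ => M q.1 q.2) (Ici 0 ×ˢ Ioi R)
  Zc : ContinuousOn (fun q : ℝ × ℝ => Z q.1 q.2) (Ici 0 ×ˢ Ioi R)

noncomputable def ee (U P D : ℝ → ℝ → ℝ) (t ξ : ℝ) : ℝ :=
  1 / 2 * ((ξ + t) ^ 3 * P t ξ ^ 2 + (ξ + t) ^ 3 * D t ξ ^ 2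
    + 3 * (ξ + t) ^ 2 * (U t ξ * D t ξ) + 3 * (ξ + t) * U t ξ ^ 2)

noncomputable def fl (U P D : ℝ → ℝ → ℝ) (t ξ : ℝ) : ℝ :=
  (ξ + t) ^ 3 * (P t ξ * D t ξ) + 3 / 2 * (ξ + t) ^ 2 * (P t ξ * U t ξ)

noncomputable def bb (U D : ℝ → ℝ → ℝ) (t ξ : ℝ) : ℝ :=
  |(ξ + t) * (U t ξ * D t ξ) + 3 / 2 * U t ξ ^ 2| + U t ξ ^ 2

noncomputable def eet (j : ℕ) (U P D M Z : ℝ → ℝ → ℝ) (t ξ : ℝ) : ℝ :=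
  1 / 2 * ((3 * (ξ + t) ^ 2 * P t ξ ^ 2 + (ξ + t) ^ 3 * (2 * P t ξ *
      (Z t ξ + 3 / (ξ + t) * D t ξ + U t ξ ^ (2 * j + 5) + M t ξ)))
    + (3 * (ξ + t) ^ 2 * D t ξ ^ 2 + (ξ + t) ^ 3 * (2 * D t ξ * (M t ξ + Z t ξ)))
    + (6 * (ξ + t) * (U t ξ * D t ξ) + 3 * (ξ + t) ^ 2 *
        ((P t ξ + D t ξ) * D t ξ + U t ξ * (M t ξ + Z t ξ)))
    + (3 * U t ξ ^ 2 + 3 * (ξ + t) * (2 * U t ξ * (P t ξ + D t ξ))))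

noncomputable def eex (U P D M Z : ℝ → ℝ → ℝ) (t ξ : ℝ) : ℝ :=
  1 / 2 * ((3 * (ξ + t) ^ 2 * P t ξ ^ 2 + (ξ + t) ^ 3 * (2 * P t ξ * M t ξ))
    + (3 * (ξ + t) ^ 2 * D t ξ ^ 2 + (ξ + t) ^ 3 * (2 * D t ξ * Z t ξ))
    + (6 * (ξ + t) * (U t ξ * D t ξ) + 3 * (ξ + t) ^ 2 *
        (D t ξ * D t ξ + U t ξ * Z t ξ))
    + (3 * U t ξ ^ 2 + 3 * (ξ + t) * (2 * U t ξ * D t ξ)))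

noncomputable def flx (U P D M Z : ℝ → ℝ → ℝ) (t ξ : ℝ) : ℝ :=
  (3 * (ξ + t) ^ 2 * (P t ξ * D t ξ) + (ξ + t) ^ 3 * (M t ξ * D t ξ + P t ξ * Z t ξ))
  + (3 * (ξ + t) * (P t ξ * U t ξ) + 3 / 2 * (ξ + t) ^ 2 * (M t ξ * U t ξ + P t ξ * D t ξ))

noncomputable def th (L t ξ : ℝ) : ℝ := Real.smoothTransition (L - (ξ + 2 * t))
noncomputable def dth (L t ξ : ℝ) : ℝ := deriv Real.smoothTransition (L - (ξ + 2 * t))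
noncomputable def ph (t ξ : ℝ) : ℝ := Real.sqrt (ξ / (ξ + 2 * t))
noncomputable def AA (L t ξ : ℝ) : ℝ := th L t ξ * (1 + ph t ξ)
noncomputable def AAt (L t ξ : ℝ) : ℝ :=
  -2 * dth L t ξ * (1 + ph t ξ) + th L t ξ * (-(ph t ξ / (ξ + 2 * t)))
noncomputable def AAx (L t ξ : ℝ) : ℝ :=
  - dth L t ξ * (1 + ph t ξ) +
    th L t ξ * (1 / (2 * (ξ + 2 * t) * ph t ξ) - ph t ξ / (2 * (ξ + 2 * t)))

section
variable {j : ℕ} {R : ℝ} {U P D M Z : ℝ → ℝ → ℝ}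

lemma ShiftSol.ee_t (h : ShiftSol j R U P D M Z) {t ξ : ℝ} (ht : 0 ≤ t) (hx : R < ξ) :
    HasDerivAt (fun s => ee U P D s ξ) (eet j U P D M Z t ξ) t := by
  have r1 : HasDerivAt (fun s : ℝ => ξ + s) 1 t := by
    simpa using (hasDerivAt_id t).const_add ξ
  have hU := h.Ut t ξ ht hx
  have hP := h.Pt t ξ ht hx
  have hD := h.Dt t ξ ht hx
  have := ((((r1.fun_pow 3).fun_mul (hP.fun_pow 2)).fun_add ((r1.fun_pow 3).fun_mul (hD.fun_pow 2))).fun_add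
    (((r1.fun_pow 2).const_mul 3).fun_mul (hU.fun_mul hD))).fun_add ((r1.const_mul 3).fun_mul (hU.fun_pow 2))
  have := this.const_mul (1 / 2)
  unfold ee
  refine this.congr_deriv ?_
  unfold eet
  simp only [show (3 - 1 : ℕ) = 2 from rfl, show (2 - 1 : ℕ) = 1 from rfl, Nat.cast_ofNat, pow_one]
  ring

lemma ShiftSol.ee_x (h : ShiftSol j R U P D M Z) {t ξ : ℝ} (ht : 0 ≤ t) (hx : R < ξ) :
    HasDerivAt (ee U P D t) (eex U P D M Z t ξ) ξ := by
  have r1 : HasDerivAt (fun s : ℝ => s + t) 1 ξ := by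
    simpa using (hasDerivAt_id ξ).add_const t
  have hU := h.Ux t ξ ht hx
  have hP := h.Px t ξ ht hx
  have hD := h.Dx t ξ ht hx
  have := ((((r1.fun_pow 3).fun_mul (hP.fun_pow 2)).fun_add ((r1.fun_pow 3).fun_mul (hD.fun_pow 2))).fun_add
    (((r1.fun_pow 2).const_mul 3).fun_mul (hU.fun_mul hD))).fun_add ((r1.const_mul 3).fun_mul (hU.fun_pow 2))
  have := this.const_mul (1 / 2)
  unfold ee
  refine this.congr_deriv ?_
  unfold eex
  simp only [show (3 - 1 : ℕ) = 2 from rfl, show (2 - 1 : ℕ) = 1 from rfl, Nat.cast_ofNat, pow_one]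
  ring

lemma ShiftSol.fl_x (h : ShiftSol j R U P D M Z) {t ξ : ℝ} (ht : 0 ≤ t) (hx : R < ξ) :
    HasDerivAt (fl U P D t) (flx U P D M Z t ξ) ξ := by
  have r1 : HasDerivAt (fun s : ℝ => s + t) 1 ξ := by
    simpa using (hasDerivAt_id ξ).add_const t
  have hU := h.Ux t ξ ht hx
  have hP := h.Px t ξ ht hx
  have hD := h.Dx t ξ ht hx
  have := ((r1.fun_pow 3).fun_mul (hP.fun_mul hD)).fun_add
    (((r1.fun_pow 2).const_mul (3/2)).fun_mul (hP.fun_mul hU))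
  unfold fl
  refine this.congr_deriv ?_
  unfold flx
  simp only [show (3 - 1 : ℕ) = 2 from rfl, show (2 - 1 : ℕ) = 1 from rfl, Nat.cast_ofNat, pow_one]
  ring

lemma key_identity {t ξ : ℝ} (hr : ξ + t ≠ 0) :
    eet j U P D M Z t ξ - (eex U P D M Z t ξ + flx U P D M Z t ξ)
      = (ξ + t) ^ 3 * P t ξ * U t ξ ^ (2 * j + 5) := by
  unfold eet eex flx
  field_simp
  ring

lemma ph_pos {t ξ : ℝ} (ht : 0 ≤ t) (hx : 0 < ξ) : 0 < ph t ξ := by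
  unfold ph; positivity

lemma ph_le {t ξ : ℝ} (ht : 0 ≤ t) (hx : 0 < ξ) : ph t ξ ≤ 1 := by
  unfold ph
  rw [Real.sqrt_le_one, div_le_one (by positivity)]
  linarith

lemma ph_sq {t ξ : ℝ} (ht : 0 ≤ t) (hx : 0 < ξ) : ph t ξ ^ 2 = ξ / (ξ + 2 * t) := by
  unfold ph
  rw [Real.sq_sqrt (by positivity)]

lemma ph_t {t ξ : ℝ} (ht : 0 ≤ t) (hx : 0 < ξ) :
    HasDerivAt (fun s => ph s ξ) (-(ph t ξ / (ξ + 2 * t))) t := by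
  have hη : ξ + 2 * t ≠ 0 := by positivity
  have r1 : HasDerivAt (fun s : ℝ => ξ + 2 * s) 2 t := by
    simpa using ((hasDerivAt_id t).const_mul 2).const_add ξ
  have := ((hasDerivAt_const t ξ).fun_div r1 hη).sqrt (by positivity)
  unfold ph
  refine this.congr_deriv ?_
  have h1 := ph_sq ht hx
  have h2 := (ph_pos ht hx).ne'
  unfold ph at h1 h2
  field_simp
  rw [h1]
  field_simp
  ring

lemma ph_x {t ξ : ℝ} (ht : 0 ≤ t) (hx : 0 < ξ) :
    HasDerivAt (ph t) (1 / (2 * (ξ + 2 * t) * ph t ξ) - ph t ξ / (2 * (ξ + 2 * t))) ξ := by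
  have hη : ξ + 2 * t ≠ 0 := by positivity
  have r1 : HasDerivAt (fun s : ℝ => s + 2 * t) 1 ξ := by
    simpa using (hasDerivAt_id ξ).add_const (2 * t)
  have := ((hasDerivAt_id ξ).fun_div r1 hη).sqrt (by simp only [id]; positivity)
  have h1 := ph_sq ht hx
  have h2 := (ph_pos ht hx).ne'
  unfold ph at h1 h2 ⊢
  refine this.congr_deriv ?_
  simp only [id]
  field_simp
  rw [h1]
  field_simp

lemma th_deriv (x : ℝ) : HasDerivAt Real.smoothTransition (deriv Real.smoothTransition x) x :=
  ((Real.smoothTransition.contDiff (n := 1)).differentiable (by norm_num) x).hasDerivAt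

lemma dth_nonneg (L t ξ : ℝ) : 0 ≤ dth L t ξ := Real.smoothTransition.monotone.deriv_nonneg

lemma AA_t {L t ξ : ℝ} (ht : 0 ≤ t) (hx : 0 < ξ) :
    HasDerivAt (fun s => AA L s ξ) (AAt L t ξ) t := by
  have r1 : HasDerivAt (fun s : ℝ => L - (ξ + 2 * s)) (-2) t := by
    simpa using (((hasDerivAt_id t).const_mul 2).const_add ξ).const_sub L
  have h1 := (th_deriv (L - (ξ + 2 * t))).comp t r1
  have := h1.fun_mul ((ph_t ht hx).const_add 1)
  unfold AA AAt th dth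
  refine this.congr_deriv ?_
  simp only [Function.comp]
  ring

lemma AA_x {L t ξ : ℝ} (ht : 0 ≤ t) (hx : 0 < ξ) :
    HasDerivAt (AA L t) (AAx L t ξ) ξ := by
  have r1 : HasDerivAt (fun s : ℝ => L - (s + 2 * t)) (-1) ξ := by
    simpa using ((hasDerivAt_id ξ).add_const (2 * t)).const_sub L
  have h1 := (th_deriv (L - (ξ + 2 * t))).comp ξ r1
  have := h1.fun_mul ((ph_x ht hx).const_add 1)
  unfold AA AAx th dth
  refine this.congr_deriv ?_
  simp only [Function.comp]
  ring

lemma bulk_aux {φ r η x y U : ℝ} (h0 : 0 < φ) (h1 : φ ≤ 1) (hr : 0 < r) (hη : 0 < η)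
    (hηr : η ≤ 2 * r) :
    1 / 32 * (|x * U| + U ^ 2) ≤ 1 / (2 * η) * (φ * (1 / 2 * r * (y ^ 2 + x ^ 2 + 3 / 4 * U ^ 2) - r * y * x)
      + 1 / φ * (1 / 2 * r * (y ^ 2 + x ^ 2 + 3 / 4 * U ^ 2) + r * y * x)) := by
  set c := 1 / φ with hc
  have hc1 : 1 ≤ c := by rw [hc, le_div_iff₀ h0]; linarith
  have hcφ : φ * c = 1 := by rw [hc]; field_simp
  have habs : 2 * |x * U| ≤ 2 * φ * x ^ 2 + 1 / 2 * c * U ^ 2 := by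
    have k1 : 2 * φ * x ^ 2 + 1 / 2 * c * U ^ 2 - 2 * (x * U) = 2 * φ * (x - 1 / 2 * c * U) ^ 2 := by
      linear_combination (2 * x * U - 1 / 2 * c * U ^ 2) * hcφ
    have k2 : 2 * φ * x ^ 2 + 1 / 2 * c * U ^ 2 + 2 * (x * U) = 2 * φ * (x + 1 / 2 * c * U) ^ 2 := by
      linear_combination (-2 * x * U - 1 / 2 * c * U ^ 2) * hcφ
    have k3 : 0 ≤ 2 * φ * (x - 1 / 2 * c * U) ^ 2 := by positivity
    have k4 : 0 ≤ 2 * φ * (x + 1 / 2 * c * U) ^ 2 := by positivity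
    rcases abs_cases (x * U) with ⟨h, _⟩ | ⟨h, _⟩ <;> rw [h] <;> linarith
  have main : r / 8 * (|x * U| + U ^ 2) ≤ φ * (1 / 2 * r * (y ^ 2 + x ^ 2 + 3 / 4 * U ^ 2) - r * y * x)
      + c * (1 / 2 * r * (y ^ 2 + x ^ 2 + 3 / 4 * U ^ 2) + r * y * x) := by
    have e1 : φ * (1 / 2 * r * (y ^ 2 + x ^ 2 + 3 / 4 * U ^ 2) - r * y * x)
      + c * (1 / 2 * r * (y ^ 2 + x ^ 2 + 3 / 4 * U ^ 2) + r * y * x)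
      = r / 2 * (2 * φ * x ^ 2 + 1 / 2 * c * U ^ 2 + 2 * φ * y ^ 2 + (c - φ) * (x + y) ^ 2
        + 3 / 4 * φ * U ^ 2 + 1 / 4 * c * U ^ 2) := by ring
    rw [e1]
    have : r / 8 * (|x * U| + U ^ 2) = r / 2 * (1 / 4 * |x * U| + 1 / 4 * U ^ 2) := by ring
    rw [this]
    apply mul_le_mul_of_nonneg_left _ (by positivity)
    have a1 : 0 ≤ 2 * φ * y ^ 2 := by positivity
    have a2 : 0 ≤ (c - φ) * (x + y) ^ 2 := mul_nonneg (by linarith) (sq_nonneg _)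
    have a3 : 0 ≤ 3 / 4 * φ * U ^ 2 := by positivity
    have a4 : 0 ≤ (c - 1) * U ^ 2 := mul_nonneg (by linarith) (sq_nonneg _)
    have a5 := abs_nonneg (x * U)
    linarith
  have hη2 : 1 / (4 * r) ≤ 1 / (2 * η) := one_div_le_one_div_of_le (by positivity) (by linarith)
  calc 1 / 32 * (|x * U| + U ^ 2) = 1 / (4 * r) * (r / 8 * (|x * U| + U ^ 2)) := by
        field_simp; norm_num; ring
    _ ≤ 1 / (2 * η) * (r / 8 * (|x * U| + U ^ 2)) :=
        mul_le_mul_of_nonneg_right hη2 (by positivity)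
    _ ≤ _ := mul_le_mul_of_nonneg_left main (by positivity)

lemma ee_eq (t ξ : ℝ) : ee U P D t ξ = 1 / 2 * (ξ + t) * (((ξ + t) * P t ξ) ^ 2
    + ((ξ + t) * D t ξ + 3 / 2 * U t ξ) ^ 2 + 3 / 4 * U t ξ ^ 2) := by unfold ee; ring

lemma fl_eq (t ξ : ℝ) : fl U P D t ξ = (ξ + t) * ((ξ + t) * P t ξ)
    * ((ξ + t) * D t ξ + 3 / 2 * U t ξ) := by unfold fl; ring

lemma ee_nonneg {t ξ : ℝ} (hr : 0 ≤ ξ + t) : 0 ≤ ee U P D t ξ := by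
  rw [ee_eq]; positivity

lemma ee_fl_nonneg {t ξ : ℝ} (hr : 0 ≤ ξ + t) : 0 ≤ ee U P D t ξ + fl U P D t ξ := by
  rw [ee_eq, fl_eq]
  have : 0 ≤ 1 / 2 * (ξ + t) * ((((ξ + t) * P t ξ) + ((ξ + t) * D t ξ + 3 / 2 * U t ξ)) ^ 2
    + 3 / 4 * U t ξ ^ 2) := by positivity
  linarith

lemma ee_fl_nonneg' {t ξ : ℝ} (hr : 0 ≤ ξ + t) : 0 ≤ ee U P D t ξ - fl U P D t ξ := by
  rw [ee_eq, fl_eq]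
  have : 0 ≤ 1 / 2 * (ξ + t) * ((((ξ + t) * P t ξ) - ((ξ + t) * D t ξ + 3 / 2 * U t ξ)) ^ 2
    + 3 / 4 * U t ξ ^ 2) := by positivity
  linarith

lemma bulk_bound {t ξ : ℝ} (ht : 0 ≤ t) (hx : 0 < ξ) :
    1 / 32 * bb U D t ξ ≤ 1 / (2 * (ξ + 2 * t)) * (ph t ξ * (ee U P D t ξ - fl U P D t ξ)
      + 1 / ph t ξ * (ee U P D t ξ + fl U P D t ξ)) := by
  have := bulk_aux (ph_pos ht hx) (ph_le ht hx) (r := ξ + t) (η := ξ + 2 * t) (by positivity)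
    (by positivity) (by linarith) (x := (ξ + t) * D t ξ + 3 / 2 * U t ξ) (y := (ξ + t) * P t ξ)
    (U := U t ξ)
  rw [ee_eq, fl_eq]
  have e : bb U D t ξ = |((ξ + t) * D t ξ + 3 / 2 * U t ξ) * U t ξ| + U t ξ ^ 2 := by
    unfold bb
    congr 2
    ring
  rw [e]
  exact this

lemma th_nonneg (L t ξ : ℝ) : 0 ≤ th L t ξ := Real.smoothTransition.nonneg _
lemma th_le (L t ξ : ℝ) : th L t ξ ≤ 1 := Real.smoothTransition.le_one _

lemma pointwise_ineq {t ξ L lam : ℝ} (ht : 0 ≤ t) (hx : 0 < ξ)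
    (hnl : (ξ + t) ^ 3 * P t ξ * U t ξ ^ (2 * j + 5) ≤ lam * ee U P D t ξ) :
    (AAt L t ξ * ee U P D t ξ + AA L t ξ * eet j U P D M Z t ξ)
      - (AAx L t ξ * (ee U P D t ξ + fl U P D t ξ)
        + AA L t ξ * (eex U P D M Z t ξ + flx U P D M Z t ξ))
      ≤ -(1 / 32 * (th L t ξ * bb U D t ξ)) + lam * (AA L t ξ * ee U P D t ξ) := by
  have hk := key_identity (j := j) (U := U) (P := P) (D := D) (M := M) (Z := Z)
    (show ξ + t ≠ 0 by positivity)
  have hb := bulk_bound (U := U) (P := P) (D := D) ht hx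
  have hφ := ph_pos ht hx
  have hr : 0 ≤ ξ + t := by positivity
  have hA : 0 ≤ AA L t ξ := mul_nonneg (th_nonneg _ _ _) (by positivity)
  have e1 : (AAt L t ξ * ee U P D t ξ + AA L t ξ * eet j U P D M Z t ξ)
      - (AAx L t ξ * (ee U P D t ξ + fl U P D t ξ)
        + AA L t ξ * (eex U P D M Z t ξ + flx U P D M Z t ξ))
      = -(dth L t ξ * (1 + ph t ξ) * (ee U P D t ξ - fl U P D t ξ))
        - th L t ξ * (1 / (2 * (ξ + 2 * t)) * (ph t ξ * (ee U P D t ξ - fl U P D t ξ)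
      + 1 / ph t ξ * (ee U P D t ξ + fl U P D t ξ)))
        + AA L t ξ * ((ξ + t) ^ 3 * P t ξ * U t ξ ^ (2 * j + 5)) := by
    rw [← hk]
    unfold AAt AAx
    have : ξ + 2 * t ≠ 0 := by positivity
    field_simp
    ring
  rw [e1]
  have h1 : 0 ≤ dth L t ξ * (1 + ph t ξ) * (ee U P D t ξ - fl U P D t ξ) :=
    mul_nonneg (mul_nonneg (dth_nonneg _ _ _) (by positivity)) (ee_fl_nonneg' hr)
  have h2 := mul_le_mul_of_nonneg_left hb (th_nonneg L t ξ)
  have h3 := mul_le_mul_of_nonneg_left hnl hA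
  linarith
end

section
variable {j : ℕ} {R : ℝ} {U P D M Z : ℝ → ℝ → ℝ}

lemma th_cont (L : ℝ) : Continuous (fun q : ℝ × ℝ => th L q.1 q.2) := by
  unfold th
  exact Real.smoothTransition.continuous.comp (by fun_prop)

lemma dth_cont (L : ℝ) : Continuous (fun q : ℝ × ℝ => dth L q.1 q.2) := by
  unfold dth
  exact ((Real.smoothTransition.contDiff (n := 1)).continuous_deriv (by norm_num)).comp (by fun_prop)

lemma ph_cont (hR : 0 ≤ R) : ContinuousOn (fun q : ℝ × ℝ => ph q.1 q.2) (Ici 0 ×ˢ Ioi R) := by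
  unfold ph
  apply ContinuousOn.sqrt
  apply ContinuousOn.div (by fun_prop) (by fun_prop)
  rintro ⟨t, ξ⟩ ⟨h1, h2⟩
  simp only [mem_Ici, mem_Ioi] at h1 h2
  have : 0 < ξ + 2 * t := by linarith
  exact this.ne'

lemma ShiftSol.ee_c (h : ShiftSol j R U P D M Z) :
    ContinuousOn (fun q : ℝ × ℝ => ee U P D q.1 q.2) (Ici 0 ×ˢ Ioi R) := by
  have := h.Uc; have := h.Pc; have := h.Dc
  unfold ee
  fun_prop

lemma ShiftSol.bb_c (h : ShiftSol j R U P D M Z) :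
    ContinuousOn (fun q : ℝ × ℝ => bb U D q.1 q.2) (Ici 0 ×ˢ Ioi R) := by
  have := h.Uc; have := h.Dc
  unfold bb
  fun_prop

lemma ShiftSol.energy (hR : 0 < R) (h : ShiftSol j R U P D M Z) {s T a L Λ S : ℝ} (hs : 0 ≤ s)
    (hsT : s ≤ T) (ha : R < a) (haL : a ≤ L) (hΛ : 0 ≤ Λ)
    (hnl : ∀ τ ∈ Icc s T, ∀ ξ, R < ξ →
      (ξ + τ) ^ 3 * P τ ξ * U τ ξ ^ (2 * j + 5) ≤ Λ / (R + τ) ^ 2 * ee U P D τ ξ)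
    (hS : ∀ τ ∈ Icc s T, ∫ ξ in a..L, ee U P D τ ξ ≤ S) :
    (∫ ξ in a..L, AA L T ξ * ee U P D T ξ)
      + 1 / 32 * (∫ τ in s..T, ∫ ξ in a..L, th L τ ξ * bb U D τ ξ)
      ≤ (∫ ξ in a..L, AA L s ξ * ee U P D s ξ) + 2 * S * Λ * (1 / (R + s) - 1 / (R + T)) := by
  have hsub : Icc s T ×ˢ Icc a L ⊆ Ici 0 ×ˢ Ioi R :=
    prod_mono (fun x hx => hs.trans hx.1) (fun x hx => ha.trans_le hx.1)
  have cU := h.Uc.mono hsub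
  have cP := h.Pc.mono hsub
  have cD := h.Dc.mono hsub
  have cM := h.Mc.mono hsub
  have cZ := h.Zc.mono hsub
  have cph := (ph_cont hR.le).mono hsub
  have cth := (th_cont L).continuousOn (s := Icc s T ×ˢ Icc a L)
  have cdth := (dth_cont L).continuousOn (s := Icc s T ×ˢ Icc a L)
  have cee := h.ee_c.mono hsub
  have cbb := h.bb_c.mono hsub
  have hpos : ∀ q ∈ Icc s T ×ˢ Icc a L, (0 : ℝ) ≤ q.1 ∧ R < q.2 := fun q hq => by
    have := hsub hq; exact ⟨this.1, this.2⟩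
  have cAA : ContinuousOn (fun q : ℝ × ℝ => AA L q.1 q.2) (Icc s T ×ˢ Icc a L) := by
    unfold AA; fun_prop
  have cAAt : ContinuousOn (fun q : ℝ × ℝ => AAt L q.1 q.2) (Icc s T ×ˢ Icc a L) := by
    unfold AAt
    have : ContinuousOn (fun q : ℝ × ℝ => ph q.1 q.2 / (q.2 + 2 * q.1)) (Icc s T ×ˢ Icc a L) := by
      apply cph.div (by fun_prop)
      intro q hq
      have := hpos q hq
      have : 0 < q.2 + 2 * q.1 := by linarith
      exact this.ne'
    fun_prop
  have cAAx : ContinuousOn (fun q : ℝ × ℝ => AAx L q.1 q.2) (Icc s T ×ˢ Icc a L) := by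
    unfold AAx
    have h1 : ContinuousOn (fun q : ℝ × ℝ => ph q.1 q.2 / (2 * (q.2 + 2 * q.1))) (Icc s T ×ˢ Icc a L) := by
      apply cph.div (by fun_prop)
      intro q hq
      have := hpos q hq
      have : 0 < 2 * (q.2 + 2 * q.1) := by linarith
      exact this.ne'
    have h2 : ContinuousOn (fun q : ℝ × ℝ => 1 / (2 * (q.2 + 2 * q.1) * ph q.1 q.2)) (Icc s T ×ˢ Icc a L) := by
      apply continuousOn_const.div (by fun_prop)
      intro q hq
      have := hpos q hq
      have h3 : 0 < 2 * (q.2 + 2 * q.1) := by linarith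
      have := ph_pos this.1 (hR.trans this.2)
      positivity
    fun_prop
  have c3 : ContinuousOn (fun q : ℝ × ℝ => 3 / (q.2 + q.1)) (Icc s T ×ˢ Icc a L) := by
    apply continuousOn_const.div (by fun_prop)
    intro q hq
    have := hpos q hq
    have : 0 < q.2 + q.1 := by linarith
    exact this.ne'
  have cet : ContinuousOn (fun q : ℝ × ℝ => eet j U P D M Z q.1 q.2) (Icc s T ×ˢ Icc a L) := by
    unfold eet; fun_prop
  have cex : ContinuousOn (fun q : ℝ × ℝ => eex U P D M Z q.1 q.2) (Icc s T ×ˢ Icc a L) := by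
    unfold eex; fun_prop
  have cflx : ContinuousOn (fun q : ℝ × ℝ => flx U P D M Z q.1 q.2) (Icc s T ×ˢ Icc a L) := by
    unfold flx; fun_prop
  have cfl : ContinuousOn (fun q : ℝ × ℝ => fl U P D q.1 q.2) (Icc s T ×ˢ Icc a L) := by
    unfold fl; fun_prop
  have clam : ContinuousOn (fun q : ℝ × ℝ => Λ / (R + q.1) ^ 2) (Icc s T ×ˢ Icc a L) := by
    apply continuousOn_const.div (by fun_prop)
    intro q hq
    have := hpos q hq
    have : 0 < (R + q.1) := by linarith
    positivity
  have cN1 : ContinuousOn (fun q : ℝ × ℝ => 1 / 32 * (th L q.1 q.2 * bb U D q.1 q.2))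
    (Icc s T ×ˢ Icc a L) := by fun_prop
  have cN2 : ContinuousOn (fun q : ℝ × ℝ => Λ / (R + q.1) ^ 2 * (AA L q.1 q.2 * ee U P D q.1 q.2))
    (Icc s T ×ˢ Icc a L) := by fun_prop
  have main := rect_ineq hsT haL (fun τ ξ => AA L τ ξ * ee U P D τ ξ)
    (fun τ ξ => AAt L τ ξ * ee U P D τ ξ + AA L τ ξ * eet j U P D M Z τ ξ)
    (fun τ ξ => AA L τ ξ * (ee U P D τ ξ + fl U P D τ ξ))
    (fun τ ξ => AAx L τ ξ * (ee U P D τ ξ + fl U P D τ ξ)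
        + AA L τ ξ * (eex U P D M Z τ ξ + flx U P D M Z τ ξ))
    (fun τ ξ => -(1 / 32 * (th L τ ξ * bb U D τ ξ)) + Λ / (R + τ) ^ 2 * (AA L τ ξ * ee U P D τ ξ))
    (fun τ hτ ξ hξ => by
      obtain ⟨h1, h2⟩ := hpos (τ, ξ) ⟨hτ, hξ⟩
      exact (AA_t h1 (hR.trans h2)).fun_mul (h.ee_t h1 h2))
    (fun τ hτ ξ hξ => by
      obtain ⟨h1, h2⟩ := hpos (τ, ξ) ⟨hτ, hξ⟩
      exact (AA_x h1 (hR.trans h2)).fun_mul ((h.ee_x h1 h2).fun_add (h.fl_x h1 h2)))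
    (by fun_prop) (by fun_prop) (by fun_prop) (cN1.neg.add cN2)
    (fun τ hτ => by
      have h1 : (0:ℝ) ≤ τ := hs.trans hτ.1
      have e : AA L τ L = 0 := by
        unfold AA th
        rw [Real.smoothTransition.zero_of_nonpos (by linarith)]; ring
      rw [e, zero_mul]
      have : 0 < ph τ a := ph_pos h1 (hR.trans ha)
      exact mul_nonneg (mul_nonneg (th_nonneg _ _ _) (by positivity)) (ee_fl_nonneg (by linarith)))
    (fun τ hτ ξ hξ => by
      obtain ⟨h1, h2⟩ := hpos (τ, ξ) ⟨hτ, hξ⟩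
      exact pointwise_ineq h1 (hR.trans h2) (hnl τ hτ ξ h2))
  have hsplit : ∀ τ ∈ Icc s T, ∫ ξ in a..L, (-(1 / 32 * (th L τ ξ * bb U D τ ξ))
      + Λ / (R + τ) ^ 2 * (AA L τ ξ * ee U P D τ ξ))
      ≤ -(1 / 32 * ∫ ξ in a..L, th L τ ξ * bb U D τ ξ) + 2 * S * Λ * (1 / (R + τ) ^ 2) := by
    intro τ hτ
    have i1 := (rect_slice (N := fun τ ξ => -(1 / 32 * (th L τ ξ * bb U D τ ξ))) cN1.neg hτ).intervalIntegrable_of_Icc (μ := volume) haL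
    have i2 := (rect_slice (N := fun τ ξ => Λ / (R + τ) ^ 2 * (AA L τ ξ * ee U P D τ ξ)) cN2 hτ).intervalIntegrable_of_Icc (μ := volume) haL
    rw [intervalIntegral.integral_add i1 i2, intervalIntegral.integral_neg,
      intervalIntegral.integral_const_mul, intervalIntegral.integral_const_mul]
    have h5 : ∫ ξ in a..L, AA L τ ξ * ee U P D τ ξ ≤ ∫ ξ in a..L, 2 * ee U P D τ ξ := by
      apply intervalIntegral.integral_mono_on haL
      · exact (rect_slice (N := fun τ ξ => AA L τ ξ * ee U P D τ ξ) (cAA.mul cee) hτ).intervalIntegrable_of_Icc haL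
      · exact ((rect_slice cee hτ).intervalIntegrable_of_Icc haL).const_mul 2
      · intro ξ hξ
        obtain ⟨h1, h2⟩ := hpos (τ, ξ) ⟨hτ, hξ⟩
        simp only at h1 h2
        have h3 := ph_pos h1 (hR.trans h2)
        have h4 := ph_le h1 (hR.trans h2)
        apply mul_le_mul_of_nonneg_right _ (ee_nonneg (by linarith))
        unfold AA
        nlinarith [th_le L τ ξ, th_nonneg L τ ξ]
    rw [intervalIntegral.integral_const_mul] at h5
    have h6 : 0 ≤ Λ / (R + τ) ^ 2 := by positivity
    have h7 := mul_le_mul_of_nonneg_left (h5.trans (mul_le_mul_of_nonneg_left (hS τ hτ) zero_le_two)) h6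
    have e : Λ / (R + τ) ^ 2 * (2 * S) = 2 * S * Λ * (1 / (R + τ) ^ 2) := by ring
    linarith
  have hinv : ∀ τ ∈ uIcc s T, HasDerivAt (fun x : ℝ => -(1 / (R + x))) (1 / (R + τ) ^ 2) τ := by
    intro τ hτ
    rw [uIcc_of_le hsT] at hτ
    have : 0 < R + τ := by linarith [hτ.1]
    have r1 : HasDerivAt (fun x : ℝ => R + x) 1 τ := by simpa using (hasDerivAt_id τ).const_add R
    have := (r1.fun_inv this.ne').fun_neg
    simp only [one_div]
    refine this.congr_deriv ?_
    field_simp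
  have cinv : IntervalIntegrable (fun τ : ℝ => 1 / (R + τ) ^ 2) volume s T := by
    apply ContinuousOn.intervalIntegrable_of_Icc hsT
    apply continuousOn_const.div (by fun_prop)
    intro τ hτ
    have : 0 < R + τ := by linarith [hτ.1]
    positivity
  have hint := intervalIntegral.integral_eq_sub_of_hasDerivAt hinv cinv
  have iB := rect_int_integrable hsT haL (N := fun τ ξ => th L τ ξ * bb U D τ ξ) (cth.mul cbb)
  have iBn : IntervalIntegrable (fun τ => -(1 / 32 * ∫ ξ in a..L, th L τ ξ * bb U D τ ξ)) volume s T :=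
    (iB.const_mul (1 / 32)).neg
  have hfin := intervalIntegral.integral_mono_on hsT
    (rect_int_integrable hsT haL (N := fun τ ξ => -(1 / 32 * (th L τ ξ * bb U D τ ξ)) + Λ / (R + τ) ^ 2 * (AA L τ ξ * ee U P D τ ξ)) (cN1.neg.add cN2))
    (iBn.add (cinv.const_mul (2 * S * Λ))) hsplit
  rw [intervalIntegral.integral_add iBn (cinv.const_mul (2 * S * Λ)),
    intervalIntegral.integral_const_mul, hint, intervalIntegral.integral_neg,
    intervalIntegral.integral_const_mul] at hfin
  have e : 2 * S * Λ * (-(1 / (R + T)) - -(1 / (R + s))) = 2 * S * Λ * (1 / (R + s) - 1 / (R + T)) := by ring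
  linarith
end

section
variable {j : ℕ} {R : ℝ} {U P D M Z : ℝ → ℝ → ℝ}

lemma nl_bound {τ ξ m : ℝ} (hR : 0 < R) (hτ : 0 ≤ τ) (hξ : R < ξ)
    (hdec : (ξ + τ) ^ 2 * U τ ξ ^ 2 ≤ m) :
    (ξ + τ) ^ 3 * P τ ξ * U τ ξ ^ (2 * j + 5)
      ≤ (3 * m ^ (j + 2) / R ^ (2 * j + 1)) / (R + τ) ^ 2 * ee U P D τ ξ := by
  have hr : 0 < ξ + τ := by linarith
  have hRt : 0 < R + τ := by linarith
  have hm : 0 ≤ m := le_trans (by positivity) hdec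
  have h1 : (ξ + τ) * ((ξ + τ) * P τ ξ * U τ ξ) ≤ 3 * ee U P D τ ξ := by
    rw [ee_eq]
    have : (ξ + τ) * P τ ξ * U τ ξ ≤ 3 * (1 / 2 * (((ξ + τ) * P τ ξ) ^ 2
      + ((ξ + τ) * D τ ξ + 3 / 2 * U τ ξ) ^ 2 + 3 / 4 * U τ ξ ^ 2)) := by
      nlinarith [sq_nonneg ((ξ + τ) * P τ ξ - U τ ξ), sq_nonneg ((ξ + τ) * P τ ξ),
        sq_nonneg ((ξ + τ) * D τ ξ + 3 / 2 * U τ ξ), sq_nonneg (U τ ξ)]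
    have := mul_le_mul_of_nonneg_left this hr.le
    linarith
  have h2 : ((ξ + τ) ^ 2 * U τ ξ ^ 2) ^ (j + 2) ≤ m ^ (j + 2) := pow_le_pow_left₀ (by positivity) hdec _
  have he : 0 ≤ ee U P D τ ξ := ee_nonneg hr.le
  have e1 : (ξ + τ) ^ 3 * P τ ξ * U τ ξ ^ (2 * j + 5)
      = ((ξ + τ) * ((ξ + τ) * P τ ξ * U τ ξ)) * (((ξ + τ) ^ 2 * U τ ξ ^ 2) ^ (j + 2)
        / (ξ + τ) ^ (2 * j + 3)) := by
    have : ((ξ + τ) ^ 2 * U τ ξ ^ 2) ^ (j + 2) = (ξ + τ) ^ (2 * j + 3) * ((ξ + τ) * U τ ξ ^ (2 * j + 4)) := by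
      generalize ξ + τ = r
      generalize U τ ξ = y
      ring
    rw [this, mul_div_cancel_left₀ _ (by positivity)]
    ring
  have h3 : R ^ (2 * j + 1) * (R + τ) ^ 2 ≤ (ξ + τ) ^ (2 * j + 3) := by
    have : (ξ + τ) ^ (2 * j + 3) = (ξ + τ) ^ (2 * j + 1) * (ξ + τ) ^ 2 := by ring
    rw [this]
    gcongr <;> linarith
  rw [e1]
  calc _ ≤ (3 * ee U P D τ ξ) * (((ξ + τ) ^ 2 * U τ ξ ^ 2) ^ (j + 2) / (ξ + τ) ^ (2 * j + 3)) :=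
        mul_le_mul_of_nonneg_right h1 (by positivity)
    _ ≤ (3 * ee U P D τ ξ) * (m ^ (j + 2) / (R ^ (2 * j + 1) * (R + τ) ^ 2)) := by
        gcongr
    _ = _ := by field_simp

def BD (R : ℝ) (U P D : ℝ → ℝ → ℝ) (τ S : ℝ) : Prop :=
  ∀ a b, R < a → a ≤ b → ∫ ξ in a..b, ee U P D τ ξ ≤ S

lemma AA_le {L t ξ : ℝ} (ht : 0 ≤ t) (hx : 0 < ξ) : AA L t ξ ≤ 2 := by
  have h3 := ph_pos ht hx
  have h4 := ph_le ht hx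
  unfold AA
  nlinarith [th_le L t ξ, th_nonneg L t ξ]

lemma AA_nonneg {L t ξ : ℝ} (ht : 0 ≤ t) (hx : 0 < ξ) : 0 ≤ AA L t ξ :=
  mul_nonneg (th_nonneg _ _ _) (by linarith [ph_pos ht hx])

lemma th_one {L t ξ : ℝ} (h : ξ + 2 * t + 1 ≤ L) : th L t ξ = 1 :=
  Real.smoothTransition.one_of_one_le (by linarith)

lemma slice {N : ℝ → ℝ → ℝ}
    (hN : ContinuousOn (fun q : ℝ × ℝ => N q.1 q.2) (Ici 0 ×ˢ Ioi R)) {τ : ℝ}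
    (hτ : 0 ≤ τ) : ContinuousOn (N τ) (Ioi R) := by
  have : ContinuousOn (fun ξ : ℝ => ((τ, ξ) : ℝ × ℝ)) (Ioi R) := by fun_prop
  exact hN.comp this (fun ξ hξ => ⟨hτ, hξ⟩)

lemma slice_ii {N : ℝ → ℝ → ℝ}
    (hN : ContinuousOn (fun q : ℝ × ℝ => N q.1 q.2) (Ici 0 ×ˢ Ioi R)) {τ a b : ℝ}
    (hτ : 0 ≤ τ) (ha : R < a) (hab : a ≤ b) : IntervalIntegrable (N τ) volume a b :=
  ((slice hN hτ).mono (fun _ hx => ha.trans_le hx.1)).intervalIntegrable_of_Icc hab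

lemma AAee_c (hR : 0 < R) (h : ShiftSol j R U P D M Z) (L : ℝ) :
    ContinuousOn (fun q : ℝ × ℝ => AA L q.1 q.2 * ee U P D q.1 q.2) (Ici 0 ×ˢ Ioi R) := by
  have := h.ee_c
  have := ph_cont hR.le
  have := (th_cont L).continuousOn (s := Ici 0 ×ˢ Ioi R)
  unfold AA
  fun_prop

lemma ShiftSol.Een_le (hR : 0 < R) (h : ShiftSol j R U P D M Z) {τ a L S : ℝ} (hτ : 0 ≤ τ)
    (ha : R < a) (haL : a ≤ L) (hS : BD R U P D τ S) :
    ∫ ξ in a..L, AA L τ ξ * ee U P D τ ξ ≤ 2 * S := by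
  have h5 : ∫ ξ in a..L, AA L τ ξ * ee U P D τ ξ ≤ ∫ ξ in a..L, 2 * ee U P D τ ξ := by
    apply intervalIntegral.integral_mono_on haL
    · exact slice_ii (N := fun τ ξ => AA L τ ξ * ee U P D τ ξ) (AAee_c hR h L) hτ ha haL
    · exact (slice_ii h.ee_c hτ ha haL).const_mul 2
    · intro ξ hξ
      have : R < ξ := ha.trans_le hξ.1
      exact mul_le_mul_of_nonneg_right (AA_le hτ (hR.trans this)) (ee_nonneg (by linarith))
  rw [intervalIntegral.integral_const_mul] at h5
  linarith [hS a L ha haL]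

lemma ShiftSol.le_Een (hR : 0 < R) (h : ShiftSol j R U P D M Z) {τ a b L : ℝ} (hτ : 0 ≤ τ)
    (ha : R < a) (hab : a ≤ b) (hL : b + 2 * τ + 1 ≤ L) :
    ∫ ξ in a..b, ee U P D τ ξ ≤ ∫ ξ in a..L, AA L τ ξ * ee U P D τ ξ := by
  have hbL : b ≤ L := by linarith
  have i := slice_ii (N := fun τ ξ => AA L τ ξ * ee U P D τ ξ) (AAee_c hR h L) hτ ha hab
  have i2 := slice_ii (N := fun τ ξ => AA L τ ξ * ee U P D τ ξ) (AAee_c hR h L) hτ (ha.trans_le hab) hbL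
  rw [← intervalIntegral.integral_add_adjacent_intervals i i2]
  have h1 : 0 ≤ ∫ ξ in b..L, AA L τ ξ * ee U P D τ ξ := by
    apply intervalIntegral.integral_nonneg hbL
    intro ξ hξ
    have : R < ξ := (ha.trans_le hab).trans_le hξ.1
    exact mul_nonneg (AA_nonneg hτ (hR.trans this)) (ee_nonneg (by linarith))
  have h2 : ∫ ξ in a..b, ee U P D τ ξ ≤ ∫ ξ in a..b, AA L τ ξ * ee U P D τ ξ := by
    apply intervalIntegral.integral_mono_on hab (slice_ii h.ee_c hτ ha hab) i
    intro ξ hξ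
    have : R < ξ := ha.trans_le hξ.1
    have hA : 1 ≤ AA L τ ξ := by
      unfold AA
      rw [th_one (by linarith [hξ.2])]
      linarith [ph_pos hτ (hR.trans this)]
    have := ee_nonneg (U := U) (P := P) (D := D) (t := τ) (ξ := ξ) (by linarith)
    nlinarith
  linarith

lemma ShiftSol.energy2 (hR : 0 < R) (h : ShiftSol j R U P D M Z)
    (hdec : ∀ τ S, 0 ≤ τ → BD R U P D τ S → ∀ ξ, R < ξ → (ξ + τ) ^ 2 * U τ ξ ^ 2 ≤ 8 * S)
    {s T a L S : ℝ} (hs : 0 ≤ s)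
    (hsT : s ≤ T) (ha : R < a) (haL : a ≤ L) (hS0 : 0 ≤ S)
    (hS : ∀ τ ∈ Icc s T, BD R U P D τ S) :
    (∫ ξ in a..L, AA L T ξ * ee U P D T ξ)
      + 1 / 32 * (∫ τ in s..T, ∫ ξ in a..L, th L τ ξ * bb U D τ ξ)
      ≤ (∫ ξ in a..L, AA L s ξ * ee U P D s ξ)
        + 2 * S * (3 * (8 * S) ^ (j + 2) / R ^ (2 * j + 1)) * (1 / (R + s) - 1 / (R + T)) :=
  h.energy hR hs hsT ha haL (by positivity)
    (fun τ hτ ξ hξ => nl_bound hR (hs.trans hτ.1) hξ (hdec τ S (hs.trans hτ.1) (hS τ hτ) ξ hξ))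
    (fun τ hτ => hS τ hτ a L ha haL)

lemma bb_nonneg (t ξ : ℝ) : 0 ≤ bb U D t ξ := by unfold bb; positivity

lemma thbb_int_nonneg {s T a L : ℝ} (hsT : s ≤ T) (haL : a ≤ L) :
    0 ≤ ∫ τ in s..T, ∫ ξ in a..L, th L τ ξ * bb U D τ ξ :=
  intervalIntegral.integral_nonneg hsT fun τ _ => intervalIntegral.integral_nonneg haL
    fun ξ _ => mul_nonneg (th_nonneg _ _ _) (bb_nonneg _ _)

lemma ShiftSol.bootstrap (hR : 0 < R) (h : ShiftSol j R U P D M Z)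
    (hdec : ∀ τ S, 0 ≤ τ → BD R U P D τ S → ∀ ξ, R < ξ → (ξ + τ) ^ 2 * U τ ξ ^ 2 ≤ 8 * S)
    {Mb K : ℝ} (hM : ∀ τ, 0 ≤ τ → BD R U P D τ Mb) (hK : 0 < K) (h0 : BD R U P D 0 (K / 2))
    (hsmall : 2 * (2 * K) * (3 * (8 * (2 * K)) ^ (j + 2) / R ^ (2 * j + 1)) * (1 / R) ≤ K / 2) :
    (∀ τ, 0 ≤ τ → BD R U P D τ (2 * K)) ∧
    ∀ T a b, 0 ≤ T → R < a → a ≤ b → ∫ τ in (0:ℝ)..T, ∫ ξ in a..b, bb U D τ ξ ≤ 64 * K := by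
  -- improved bound
  have improve : ∀ T, 0 ≤ T → (∀ τ ∈ Icc 0 T, BD R U P D τ (2 * K)) → ∀ a L, R < a → a ≤ L →
      (∫ ξ in a..L, AA L T ξ * ee U P D T ξ)
      + 1 / 32 * (∫ τ in (0:ℝ)..T, ∫ ξ in a..L, th L τ ξ * bb U D τ ξ) ≤ 3 / 2 * K := by
    intro T hT hB a L ha haL
    have h1 := h.energy2 hR hdec le_rfl hT ha haL (S := 2 * K) (by positivity) hB
    have h2 := h.Een_le hR le_rfl ha haL h0
    have h3 : 1 / (R + 0) - 1 / (R + T) ≤ 1 / R := by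
      have : 0 ≤ 1 / (R + T) := by positivity
      rw [add_zero]; linarith
    have h4 := mul_le_mul_of_nonneg_left h3
      (show 0 ≤ 2 * (2 * K) * (3 * (8 * (2 * K)) ^ (j + 2) / R ^ (2 * j + 1)) by positivity)
    linarith
  have hM0 : 0 ≤ Mb := by
    have := hM 0 le_rfl (R + 1) (R + 1) (by linarith) le_rfl
    simpa using this
  set B := 2 * Mb * (3 * (8 * Mb) ^ (j + 2) / R ^ (2 * j + 1)) with hB
  have hB0 : 0 ≤ B := by positivity
  obtain ⟨δ, hδ, hδB⟩ : ∃ δ : ℝ, 0 < δ ∧ B * (δ / R ^ 2) ≤ K / 2 := by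
    refine ⟨K * R ^ 2 / (2 * (B + 1)), by positivity, ?_⟩
    have : B * (K * R ^ 2 / (2 * (B + 1)) / R ^ 2) = K / 2 * (B / (B + 1)) := by field_simp
    rw [this]
    have : B / (B + 1) ≤ 1 := by rw [div_le_one (by positivity)]; linarith
    nlinarith
  have ind : ∀ n : ℕ, ∀ τ ∈ Icc (0:ℝ) (n * δ), BD R U P D τ (2 * K) := by
    intro n
    induction n with
    | zero =>
      intro τ hτ
      have : τ = 0 := by
        have h1 := hτ.1; have h2 := hτ.2
        simp at h2; linarith
      subst this
      intro a b ha hab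
      linarith [h0 a b ha hab]
    | succ n ih =>
      intro τ hτ
      rcases le_or_gt τ (n * δ) with hle | hgt
      · exact ih τ ⟨hτ.1, hle⟩
      intro a b ha hab
      have hs : (0:ℝ) ≤ n * δ := by positivity
      set L := b + 2 * τ + 1 with hL
      have haL : a ≤ L := by linarith [hτ.1]
      have h1 := h.le_Een hR hτ.1 ha hab (L := L) le_rfl
      have h2 := h.energy2 hR hdec hs hgt.le ha haL hM0 (fun τ' hτ' => hM τ' (hs.trans hτ'.1))
      have h3 := thbb_int_nonneg (U := U) (D := D) hgt.le haL
      have h4 := improve (n * δ) hs ih a L ha haL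
      have h5 := thbb_int_nonneg (U := U) (D := D) hs haL
      have h6 : 1 / (R + n * δ) - 1 / (R + τ) ≤ δ / R ^ 2 := by
        have hτ2 := hτ.2
        push_cast at hτ2
        rw [div_sub_div _ _ (by positivity) (by linarith [hτ.1])]
        apply div_le_div₀ hδ.le (by linarith) (by positivity)
        have : R ≤ R + n * δ := by linarith
        have : R ≤ R + τ := by linarith [hτ.1]
        nlinarith
      have h7 := mul_le_mul_of_nonneg_left h6 hB0
      linarith
  have all : ∀ τ, 0 ≤ τ → BD R U P D τ (2 * K) := by
    intro τ hτ
    obtain ⟨n, hn⟩ := exists_nat_ge (τ / δ)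
    exact ind n τ ⟨hτ, by rwa [div_le_iff₀ hδ] at hn⟩
  refine ⟨all, ?_⟩
  intro T a b hT ha hab
  set L := b + 2 * T + 1 with hL
  have haL : a ≤ L := by linarith
  have hbL : b ≤ L := by linarith
  have h1 := improve T hT (fun τ hτ => all τ hτ.1) a L ha haL
  have h2 : 0 ≤ ∫ ξ in a..L, AA L T ξ * ee U P D T ξ := by
    apply intervalIntegral.integral_nonneg haL
    intro ξ hξ
    have : R < ξ := ha.trans_le hξ.1
    exact mul_nonneg (AA_nonneg hT (hR.trans this)) (ee_nonneg (by linarith))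
  have cth : ContinuousOn (fun q : ℝ × ℝ => th L q.1 q.2 * bb U D q.1 q.2) (Ici 0 ×ˢ Ioi R) :=
    (th_cont L).continuousOn.mul h.bb_c
  have h3 : ∫ τ in (0:ℝ)..T, ∫ ξ in a..b, bb U D τ ξ
      ≤ ∫ τ in (0:ℝ)..T, ∫ ξ in a..L, th L τ ξ * bb U D τ ξ := by
    apply intervalIntegral.integral_mono_on hT
    · exact rect_int_integrable hT hab (h.bb_c.mono (prod_mono (fun x hx => hx.1)
        (fun x hx => ha.trans_le hx.1)))
    · exact rect_int_integrable hT haL (N := fun τ ξ => th L τ ξ * bb U D τ ξ) (cth.mono (prod_mono (fun x hx => hx.1)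
        (fun x hx => ha.trans_le hx.1)))
    · intro τ hτ
      have i := slice_ii (N := fun τ ξ => th L τ ξ * bb U D τ ξ) cth hτ.1 ha hab
      have i2 := slice_ii (N := fun τ ξ => th L τ ξ * bb U D τ ξ) cth hτ.1 (ha.trans_le hab) hbL
      rw [← intervalIntegral.integral_add_adjacent_intervals i i2]
      have h1 : 0 ≤ ∫ ξ in b..L, th L τ ξ * bb U D τ ξ :=
        intervalIntegral.integral_nonneg hbL fun ξ hξ => mul_nonneg (th_nonneg _ _ _) (bb_nonneg _ _)
      have h2 : ∫ ξ in a..b, bb U D τ ξ = ∫ ξ in a..b, th L τ ξ * bb U D τ ξ := by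
        apply intervalIntegral.integral_congr
        intro ξ hξ
        rw [uIcc_of_le hab] at hξ
        simp only
        rw [th_one (by linarith [hξ.2, hτ.2]), one_mul]
      linarith
  linarith
end

lemma isOpen_ext (R : ℝ) : IsOpen {q : ℝ × ℝ | R + |q.1| < q.2} := by
  apply isOpen_lt <;> fun_prop

lemma line1 {g : ℝ × ℝ → ℝ} {t r : ℝ} (hg : DifferentiableAt ℝ g (t, r)) :
    HasDerivAt (fun s => g (s, r)) (fderiv ℝ g (t, r) (1, 0)) t := by
  have h1 : HasDerivAt (fun s : ℝ => (s, r)) ((1 : ℝ), (0 : ℝ)) t :=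
    (hasDerivAt_id t).prodMk (hasDerivAt_const t r)
  exact hg.hasFDerivAt.comp_hasDerivAt t h1

lemma line2 {g : ℝ × ℝ → ℝ} {t r : ℝ} (hg : DifferentiableAt ℝ g (t, r)) :
    HasDerivAt (fun s => g (t, s)) (fderiv ℝ g (t, r) (0, 1)) r := by
  have h1 : HasDerivAt (fun s : ℝ => (t, s)) ((0 : ℝ), (1 : ℝ)) r :=
    (hasDerivAt_const r t).prodMk (hasDerivAt_id r)
  exact hg.hasFDerivAt.comp_hasDerivAt r h1

lemma line3 {g : ℝ × ℝ → ℝ} {t ξ : ℝ} (hg : DifferentiableAt ℝ g (t, ξ + t)) :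
    HasDerivAt (fun s => g (s, ξ + s))
      (fderiv ℝ g (t, ξ + t) (1, 0) + fderiv ℝ g (t, ξ + t) (0, 1)) t := by
  have h1 : HasDerivAt (fun s : ℝ => (s, ξ + s)) ((1 : ℝ), (1 : ℝ)) t := by
    refine (hasDerivAt_id t).prodMk ?_
    simpa using (hasDerivAt_id t).const_add ξ
  have h2 := hg.hasFDerivAt.comp_hasDerivAt t h1
  refine h2.congr_deriv ?_
  rw [← map_add]
  simp

lemma line4 {g : ℝ × ℝ → ℝ} {t ξ : ℝ} (hg : DifferentiableAt ℝ g (t, ξ + t)) :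
    HasDerivAt (fun s => g (t, s + t)) (fderiv ℝ g (t, ξ + t) (0, 1)) ξ := by
  have h1 : HasDerivAt (fun s : ℝ => (t, s + t)) ((0 : ℝ), (1 : ℝ)) ξ := by
    refine (hasDerivAt_const ξ t).prodMk ?_
    simpa using (hasDerivAt_id ξ).add_const t
  exact hg.hasFDerivAt.comp_hasDerivAt ξ h1

lemma regularity {j : ℕ} {R : ℝ} {u : ℝ → ℝ → ℝ} (h : IsExtSol (2 * j + 5) 2 R u) :
    ∃ M Z : ℝ → ℝ → ℝ, ShiftSol j R (fun t ξ => u t (ξ + t)) (fun t ξ => dtu u t (ξ + t))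
      (fun t ξ => deriv (u t) (ξ + t)) M Z := by
  obtain ⟨hf, heq⟩ := h
  set Ω := {q : ℝ × ℝ | R + |q.1| < q.2} with hΩ
  have hΩo : IsOpen Ω := isOpen_ext R
  set f : ℝ × ℝ → ℝ := fun q => u q.1 q.2 with hfdef
  have hfa : ∀ q ∈ Ω, ContDiffAt ℝ 2 f q := fun q hq => hf.contDiffAt (hΩo.mem_nhds hq)
  have hfd : ∀ q ∈ Ω, DifferentiableAt ℝ f q := fun q hq => (hfa q hq).differentiableAt (by norm_num)
  have hF : ∀ q ∈ Ω, ContDiffAt ℝ 1 (fderiv ℝ f) q := fun q hq =>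
    (hfa q hq).fderiv_right (by norm_num)
  set G1 : ℝ × ℝ → ℝ := fun q => fderiv ℝ f q (1, 0) with hG1
  set G2 : ℝ × ℝ → ℝ := fun q => fderiv ℝ f q (0, 1) with hG2
  have c1 : ∀ q ∈ Ω, ContDiffAt ℝ 1 G1 q := fun q hq => (hF q hq).clm_apply contDiffAt_const
  have c2 : ∀ q ∈ Ω, ContDiffAt ℝ 1 G2 q := fun q hq => (hF q hq).clm_apply contDiffAt_const
  have d1 : ∀ q ∈ Ω, DifferentiableAt ℝ G1 q := fun q hq => (c1 q hq).differentiableAt (by norm_num)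
  have d2 : ∀ q ∈ Ω, DifferentiableAt ℝ G2 q := fun q hq => (c2 q hq).differentiableAt (by norm_num)
  have e1 : ∀ t r, (t, r) ∈ Ω → dtu u t r = G1 (t, r) := fun t r hq => (line1 (hfd _ hq)).deriv
  have e2 : ∀ t r, (t, r) ∈ Ω → deriv (u t) r = G2 (t, r) := fun t r hq => (line2 (hfd _ hq)).deriv
  have symm : ∀ q ∈ Ω, fderiv ℝ G1 q (0, 1) = fderiv ℝ G2 q (1, 0) := by
    intro q hq
    have hd : DifferentiableAt ℝ (fderiv ℝ f) q := (hF q hq).differentiableAt (by norm_num)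
    have s := (hfa q hq).isSymmSndFDerivAt (by simp)
    have a1 : fderiv ℝ G1 q (0, 1) = fderiv ℝ (fderiv ℝ f) q (0, 1) (1, 0) := by
      rw [hG1, fderiv_clm_apply hd (differentiableAt_const _)]; simp
    have a2 : fderiv ℝ G2 q (1, 0) = fderiv ℝ (fderiv ℝ f) q (1, 0) (0, 1) := by
      rw [hG2, fderiv_clm_apply hd (differentiableAt_const _)]; simp
    rw [a1, a2]
    exact s _ _
  have mem : ∀ t ξ, 0 ≤ t → R < ξ → (t, ξ + t) ∈ Ω := by
    intro t ξ ht hx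
    simp only [hΩ, mem_ofPred_eq, abs_of_nonneg ht]; linarith
  have pde : ∀ q ∈ Ω, fderiv ℝ G1 q (1, 0)
      = fderiv ℝ G2 q (0, 1) + 3 / q.2 * G2 q + f q ^ (2 * j + 5) := by
    rintro ⟨t, r⟩ hq
    have h1 := heq t r hq
    have b1 : deriv (fun s => dtu u s r) t = fderiv ℝ G1 (t, r) (1, 0) := by
      refine ((line1 (d1 _ hq)).congr_of_eventuallyEq ?_).deriv
      have : ContinuousAt (fun s : ℝ => (s, r)) t := by fun_prop
      filter_upwards [this.preimage_mem_nhds (hΩo.mem_nhds hq)] with s hs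
      exact e1 s r hs
    have b2 : deriv (deriv (u t)) r = fderiv ℝ G2 (t, r) (0, 1) := by
      refine ((line2 (d2 _ hq)).congr_of_eventuallyEq ?_).deriv
      have : ContinuousAt (fun s : ℝ => (t, s)) r := by fun_prop
      filter_upwards [this.preimage_mem_nhds (hΩo.mem_nhds hq)] with s hs
      exact e2 t s hs
    rw [b1, b2, e2 t r hq] at h1
    have : |u t r| ^ (2 * j + 5 - 1) = u t r ^ (2 * j + 4) :=
      Even.pow_abs ⟨j + 2, by omega⟩ _
    rw [this] at h1
    simp only [hfdef]
    rw [pow_succ _ (2 * j + 4)]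
    linarith
  have cont : ∀ g : ℝ × ℝ → ℝ, (∀ q ∈ Ω, ContinuousAt g q) →
      ContinuousOn (fun q : ℝ × ℝ => g (q.1, q.2 + q.1)) (Ici 0 ×ˢ Ioi R) := by
    intro g hg
    have k1 : ContinuousOn g Ω := fun q hq => (hg q hq).continuousWithinAt
    have k2 : ContinuousOn (fun q : ℝ × ℝ => ((q.1, q.2 + q.1) : ℝ × ℝ)) (Ici 0 ×ˢ Ioi R) := by fun_prop
    exact k1.comp k2 (fun q hq => mem q.1 q.2 hq.1 hq.2)
  have near1 : ∀ (a : ℝ → ℝ → ℝ) (g : ℝ × ℝ → ℝ), (∀ t r, (t, r) ∈ Ω → a t r = g (t, r)) →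
      ∀ t ξ, 0 ≤ t → R < ξ → (fun s => a s (ξ + s)) =ᶠ[nhds t] fun s => g (s, ξ + s) := by
    intro a g hag t ξ ht hx
    have : ContinuousAt (fun s : ℝ => (s, ξ + s)) t := by fun_prop
    filter_upwards [this.preimage_mem_nhds (hΩo.mem_nhds (mem t ξ ht hx))] with s hs
    exact hag _ _ hs
  have near2 : ∀ (a : ℝ → ℝ → ℝ) (g : ℝ × ℝ → ℝ), (∀ t r, (t, r) ∈ Ω → a t r = g (t, r)) →
      ∀ t ξ, 0 ≤ t → R < ξ → (fun s => a t (s + t)) =ᶠ[nhds ξ] fun s => g (t, s + t) := by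
    intro a g hag t ξ ht hx
    have : ContinuousAt (fun s : ℝ => (t, s + t)) ξ := by fun_prop
    filter_upwards [this.preimage_mem_nhds (hΩo.mem_nhds (mem t ξ ht hx))] with s hs
    exact hag _ _ hs
  refine ⟨fun t ξ => fderiv ℝ G2 (t, ξ + t) (1, 0), fun t ξ => fderiv ℝ G2 (t, ξ + t) (0, 1), ?_⟩
  constructor
  · intro t ξ ht hx
    rw [e1 _ _ (mem t ξ ht hx), e2 _ _ (mem t ξ ht hx)]
    exact line3 (hfd _ (mem t ξ ht hx))
  · intro t ξ ht hx
    rw [e2 _ _ (mem t ξ ht hx)]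
    exact line4 (hfd _ (mem t ξ ht hx))
  · intro t ξ ht hx
    refine ((line3 (d1 _ (mem t ξ ht hx))).congr_of_eventuallyEq
      (near1 (dtu u) G1 e1 t ξ ht hx)).congr_deriv ?_
    rw [symm _ (mem t ξ ht hx), pde _ (mem t ξ ht hx), e2 _ _ (mem t ξ ht hx)]
  · intro t ξ ht hx
    refine ((line4 (d1 _ (mem t ξ ht hx))).congr_of_eventuallyEq
      (near2 (dtu u) G1 e1 t ξ ht hx)).congr_deriv ?_
    rw [symm _ (mem t ξ ht hx)]
  · intro t ξ ht hx
    exact (line3 (d2 _ (mem t ξ ht hx))).congr_of_eventuallyEq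
      (near1 (fun t => deriv (u t)) G2 e2 t ξ ht hx)
  · intro t ξ ht hx
    exact (line4 (d2 _ (mem t ξ ht hx))).congr_of_eventuallyEq
      (near2 (fun t => deriv (u t)) G2 e2 t ξ ht hx)
  · exact cont f (fun q hq => (hfa q hq).continuousAt)
  · exact (cont G1 (fun q hq => (c1 q hq).continuousAt)).congr
      (fun q hq => e1 _ _ (mem _ _ hq.1 hq.2))
  · exact (cont G2 (fun q hq => (c2 q hq).continuousAt)).congr
      (fun q hq => e2 _ _ (mem _ _ hq.1 hq.2))
  · exact cont (fun q => fderiv ℝ G2 q (1, 0)) (fun q hq =>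
      ((c2 q hq).continuousAt_fderiv (by norm_num)).clm_apply continuousAt_const)
  · exact cont (fun q => fderiv ℝ G2 q (0, 1)) (fun q hq =>
      ((c2 q hq).continuousAt_fderiv (by norm_num)).clm_apply continuousAt_const)

structure Sl (R t : ℝ) (v d : ℝ → ℝ) : Prop where
  hR : 0 < R
  ht : 0 ≤ t
  hd : ∀ ξ, R < ξ → HasDerivAt v (d ξ) ξ
  hdc : ContinuousOn d (Ioi R)

section
variable {R t : ℝ} {v d : ℝ → ℝ}

lemma Sl.hvc (h : Sl R t v d) : ContinuousOn v (Ioi R) :=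
  fun ξ hξ => (h.hd ξ hξ).continuousAt.continuousWithinAt

lemma ii_of {R a b : ℝ} {g : ℝ → ℝ} (hg : ContinuousOn g (Ioi R)) (ha : R < a) (hab : a ≤ b) :
    IntervalIntegrable g volume a b :=
  (hg.mono (fun _ hx => ha.trans_le hx.1)).intervalIntegrable_of_Icc hab

lemma Sl.ftc (h : Sl R t v d) {a b : ℝ} (ha : R < a) (hab : a ≤ b) :
    ∫ ξ in a..b, d ξ = v b - v a := by
  apply intervalIntegral.integral_eq_sub_of_hasDerivAt
  · intro x hx
    rw [uIcc_of_le hab] at hx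
    exact h.hd x (ha.trans_le hx.1)
  · exact ii_of h.hdc ha hab

lemma inv_sq_int (hR : 0 < R) (ht : 0 ≤ t) {a b : ℝ} (ha : R < a) (hab : a ≤ b) :
    ∫ ξ in a..b, 1 / (ξ + t) ^ 3 ≤ 1 / (2 * (a + t) ^ 2) := by
  have e : ∫ ξ in a..b, 1 / (ξ + t) ^ 3 = (- 1 / (2 * (b + t) ^ 2)) - (- 1 / (2 * (a + t) ^ 2)) := by
    apply intervalIntegral.integral_eq_sub_of_hasDerivAt (f := fun ξ => - 1 / (2 * (ξ + t) ^ 2))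
    · intro x hx
      rw [uIcc_of_le hab] at hx
      have hx0 : 0 < x + t := by linarith [hx.1]
      have r1 : HasDerivAt (fun s : ℝ => s + t) 1 x := by
        simpa using (hasDerivAt_id x).add_const t
      have := (hasDerivAt_const x (-1 : ℝ)).fun_div ((r1.fun_pow 2).const_mul 2) (by positivity)
      refine this.congr_deriv ?_
      simp only [show (2 - 1 : ℕ) = 1 from rfl, Nat.cast_ofNat, pow_one]
      field_simp
      ring
    · apply ContinuousOn.intervalIntegrable_of_Icc hab
      apply ContinuousOn.div continuousOn_const (by fun_prop)
      intro x hx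
      have : 0 < x + t := by linarith [hx.1]
      positivity
  rw [e]
  have : 0 ≤ 1 / (2 * (b + t) ^ 2) := by positivity
  rw [neg_div, neg_div]; linarith

lemma Sl.diff (h : Sl R t v d) {m : ℝ} (hm : 0 < m)
    (hE : ∀ a b, R < a → a ≤ b → ∫ ξ in a..b, (ξ + t) ^ 3 * d ξ ^ 2 ≤ m ^ 2)
    {a b : ℝ} (ha : R < a) (hab : a ≤ b) : |v b - v a| ≤ m / (a + t) := by
  have hR := h.hR
  have ht := h.ht
  have ha0 : 0 < a + t := by linarith
  rw [← h.ftc ha hab]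
  set c := 1 / ((a + t) * m) with hc
  have hc0 : 0 < c := by positivity
  have i1 : ContinuousOn (fun ξ => (ξ + t) ^ 3 * d ξ ^ 2) (Ioi R) := by
    have := h.hdc
    fun_prop
  have i2 : ContinuousOn (fun ξ : ℝ => 1 / (ξ + t) ^ 3) (Ioi R) := by
    apply ContinuousOn.div continuousOn_const (by fun_prop)
    intro x hx
    have : 0 < x + t := by linarith [mem_Ioi.1 hx]
    positivity
  have j1 := (ii_of i1 ha hab).const_mul (c / 2)
  have j2 := (ii_of i2 ha hab).const_mul (1 / (2 * c))
  calc |∫ ξ in a..b, d ξ| ≤ ∫ ξ in a..b, |d ξ| := intervalIntegral.abs_integral_le_integral_abs hab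
    _ ≤ ∫ ξ in a..b, (c / 2 * ((ξ + t) ^ 3 * d ξ ^ 2) + 1 / (2 * c) * (1 / (ξ + t) ^ 3)) := by
        apply intervalIntegral.integral_mono_on hab _ (j1.add j2)
        · intro ξ hξ
          have hx0 : 0 < ξ + t := by linarith [hξ.1]
          have hs : 0 < c * (ξ + t) ^ 3 := by positivity
          have : c / 2 * ((ξ + t) ^ 3 * d ξ ^ 2) + 1 / (2 * c) * (1 / (ξ + t) ^ 3)
            = ((c * (ξ + t) ^ 3) ^ 2 * d ξ ^ 2 + 1) / (2 * (c * (ξ + t) ^ 3)) := by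
            field_simp
          rw [this, le_div_iff₀ (by positivity), ← sq_abs (d ξ)]
          nlinarith [sq_nonneg (c * (ξ + t) ^ 3 * |d ξ| - 1)]
        · exact ii_of h.hdc.abs ha hab
    _ = c / 2 * (∫ ξ in a..b, (ξ + t) ^ 3 * d ξ ^ 2) + 1 / (2 * c) * ∫ ξ in a..b, 1 / (ξ + t) ^ 3 := by
        rw [intervalIntegral.integral_add j1 j2, intervalIntegral.integral_const_mul,
          intervalIntegral.integral_const_mul]
    _ ≤ c / 2 * m ^ 2 + 1 / (2 * c) * (1 / (2 * (a + t) ^ 2)) := by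
        gcongr
        · exact hE a b ha hab
        · exact inv_sq_int hR ht ha hab
    _ = 3 / 4 * (m / (a + t)) := by
        rw [hc]; field_simp; ring
    _ ≤ _ := by
        have : 0 < m / (a + t) := by positivity
        linarith

lemma Sl.decay (h : Sl R t v d) {m M : ℝ} (hm : 0 < m)
    (hE : ∀ a b, R < a → a ≤ b → ∫ ξ in a..b, (ξ + t) ^ 3 * d ξ ^ 2 ≤ m ^ 2)
    (hM : ∀ ξ, R < ξ → |v ξ| ≤ M / (ξ + t)) {ξ : ℝ} (hξ : R < ξ) : |v ξ| ≤ m / (ξ + t) := by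
  have key : ∀ b, ξ ≤ b → |v ξ| ≤ M / (b + t) + m / (ξ + t) := by
    intro b hb
    have h1 := h.diff hm hE hξ hb
    have h2 := hM b (hξ.trans_le hb)
    have h3 : |v ξ| ≤ |v b| + |v b - v ξ| := by
      have := abs_sub_abs_le_abs_sub (v ξ) (v b)
      rw [abs_sub_comm] at this
      linarith
    linarith
  have lim : Tendsto (fun b : ℝ => M / (b + t) + m / (ξ + t)) atTop (nhds (0 + m / (ξ + t))) := by
    apply Tendsto.add_const
    exact Tendsto.div_atTop tendsto_const_nhds (tendsto_atTop_add_const_right _ _ tendsto_id)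
  rw [zero_add] at lim
  exact ge_of_tendsto lim ((eventually_ge_atTop ξ).mono key)

lemma Sl.decay8 (h : Sl R t v d) {m : ℝ} (hm : 0 < m)
    (hE : ∀ a b, R < a → a ≤ b → ∫ ξ in a..b, (ξ + t) ^ 3 * d ξ ^ 2 ≤ m ^ 2)
    (h8 : ∫⁻ ξ in Ioi R, ENNReal.ofReal (|v ξ| ^ (8:ℝ) * (ξ + t) ^ 3) < ⊤) {ξ : ℝ} (hξ : R < ξ) :
    |v ξ| ≤ m / (ξ + t) := by
  by_contra! hc
  set c := |v ξ| - m / (ξ + t) with hcd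
  have hc0 : 0 < c := by rw [hcd]; linarith
  have hR := h.hR
  have ht := h.ht
  have key : ∀ b, ξ ≤ b → c ≤ |v b| := by
    intro b hb
    have h1 := h.diff hm hE hξ hb
    have := abs_sub_abs_le_abs_sub (v ξ) (v b)
    rw [abs_sub_comm] at this
    rw [hcd]
    linarith
  have h1 : ∫⁻ _ in Ioi ξ, ENNReal.ofReal (c ^ (8:ℝ) * R ^ 3)
      ≤ ∫⁻ ξ in Ioi R, ENNReal.ofReal (|v ξ| ^ (8:ℝ) * (ξ + t) ^ 3) := by
    refine le_trans (setLIntegral_mono' measurableSet_Ioi ?_) (lintegral_mono_set (Ioi_subset_Ioi hξ.le))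
    intro x hx
    have hx' := mem_Ioi.1 hx
    apply ENNReal.ofReal_le_ofReal
    have := key x hx'.le
    gcongr
    linarith
  rw [setLIntegral_const, Real.volume_Ioi, ENNReal.mul_top] at h1
  · exact absurd h8 (not_lt.2 h1)
  · rw [ne_eq, ENNReal.ofReal_eq_zero, not_le]; positivity

lemma Sl.hardy (h : Sl R t v d) {m : ℝ} (hm : 0 < m)
    (hE : ∀ a b, R < a → a ≤ b → ∫ ξ in a..b, (ξ + t) ^ 3 * d ξ ^ 2 ≤ m ^ 2)
    (hdec : ∀ ξ, R < ξ → |v ξ| ≤ m / (ξ + t)) {a b : ℝ} (ha : R < a) (hab : a ≤ b) :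
    ∫ ξ in a..b, (ξ + t) * v ξ ^ 2 ≤ 2 * m ^ 2 := by
  have hR := h.hR
  have ht := h.ht
  have hdc := h.hdc
  have hvc := h.hvc
  have i1 : ContinuousOn (fun ξ => (ξ + t) ^ 3 * d ξ ^ 2) (Ioi R) := by fun_prop
  have i2 : ContinuousOn (fun ξ => (ξ + t) * v ξ ^ 2) (Ioi R) := by fun_prop
  have i3 : ContinuousOn (fun ξ => 2 * (ξ + t) * v ξ ^ 2 + (ξ + t) ^ 2 * (2 * v ξ * d ξ)) (Ioi R) := by fun_prop
  have f : ∫ ξ in a..b, (2 * (ξ + t) * v ξ ^ 2 + (ξ + t) ^ 2 * (2 * v ξ * d ξ))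
      = (b + t) ^ 2 * v b ^ 2 - (a + t) ^ 2 * v a ^ 2 := by
    apply intervalIntegral.integral_eq_sub_of_hasDerivAt (f := fun ξ => (ξ + t) ^ 2 * v ξ ^ 2)
    · intro x hx
      rw [uIcc_of_le hab] at hx
      have r1 : HasDerivAt (fun s : ℝ => s + t) 1 x := by
        simpa using (hasDerivAt_id x).add_const t
      refine ((r1.fun_pow 2).fun_mul ((h.hd x (ha.trans_le hx.1)).fun_pow 2)).congr_deriv ?_
      simp only [show (2 - 1 : ℕ) = 1 from rfl, Nat.cast_ofNat, pow_one]
      ring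
    · exact ii_of i3 ha hab
  have mono : ∫ ξ in a..b, (ξ + t) * v ξ ^ 2 ≤
      ∫ ξ in a..b, ((2 * (ξ + t) * v ξ ^ 2 + (ξ + t) ^ 2 * (2 * v ξ * d ξ)) + (ξ + t) ^ 3 * d ξ ^ 2) := by
    apply intervalIntegral.integral_mono_on hab (ii_of i2 ha hab) ((ii_of i3 ha hab).add (ii_of i1 ha hab))
    intro x hx
    have : 0 < x + t := by linarith [hx.1]
    nlinarith [mul_nonneg this.le (sq_nonneg (v x + (x + t) * d x))]
  rw [intervalIntegral.integral_add (ii_of i3 ha hab) (ii_of i1 ha hab), f] at mono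
  have hb : (b + t) ^ 2 * v b ^ 2 ≤ m ^ 2 := by
    have hb0 : 0 < b + t := by linarith
    have := hdec b (ha.trans_le hab)
    rw [le_div_iff₀ hb0] at this
    rw [← sq_abs (v b), ← mul_pow]
    exact pow_le_pow_left₀ (by positivity) (by linarith) 2
  have : 0 ≤ (a + t) ^ 2 * v a ^ 2 := by positivity
  linarith [hE a b ha hab]

lemma lint_of_int {f : ℝ → ℝ} {S : ℝ} (hf : ContinuousOn f (Ioi R)) (h0 : ∀ x, R < x → 0 ≤ f x)
    (hS : ∀ a b, R < a → a ≤ b → ∫ x in a..b, f x ≤ S) :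
    ∫⁻ x in Ioi R, ENNReal.ofReal (f x) ≤ ENNReal.ofReal S := by
  have hU : Ioi R = ⋃ n : ℕ, Ioc (R + 1 / ((n:ℝ) + 1)) (R + 1 + n) := by
    ext x
    simp only [mem_Ioi, mem_iUnion, mem_Ioc]
    constructor
    · intro hx
      obtain ⟨n, hn⟩ := exists_nat_one_div_lt (sub_pos.2 hx)
      obtain ⟨k, hk⟩ := exists_nat_ge (x - R - 1)
      refine ⟨max n k, ?_, ?_⟩
      · have : 1 / (((max n k : ℕ):ℝ) + 1) ≤ 1 / ((n:ℝ) + 1) := by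
          gcongr; exact le_max_left _ _
        linarith
      · have : (k:ℝ) ≤ ((max n k : ℕ):ℝ) := by exact_mod_cast le_max_right _ _
        linarith
    · rintro ⟨n, hn, _⟩
      have : 0 < 1 / ((n:ℝ) + 1) := by positivity
      linarith
  rw [hU, setLIntegral_iUnion_of_directed]
  · apply iSup_le
    intro n
    have hp : 0 < 1 / ((n:ℝ) + 1) := by positivity
    have ha : R < R + 1 / ((n:ℝ) + 1) := by linarith
    have hp1 : 1 / ((n:ℝ) + 1) ≤ 1 := by
      rw [div_le_one (by positivity)]; have : (0:ℝ) ≤ n := by positivity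
      linarith
    have hab : R + 1 / ((n:ℝ) + 1) ≤ R + 1 + n := by
      have : (0:ℝ) ≤ n := by positivity
      linarith
    have hi := (ii_of hf ha hab).1
    rw [← ofReal_integral_eq_lintegral_ofReal hi, ← intervalIntegral.integral_of_le hab]
    · exact ENNReal.ofReal_le_ofReal (hS _ _ ha hab)
    · refine (ae_restrict_iff' measurableSet_Ioc).2 (ae_of_all _ ?_)
      intro x hx
      exact h0 x (ha.trans hx.1)
  · apply Monotone.directed_le
    intro n k hnk
    apply Ioc_subset_Ioc
    · have : (n:ℝ) ≤ k := by exact_mod_cast hnk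
      gcongr
    · have : (n:ℝ) ≤ k := by exact_mod_cast hnk
      linarith

lemma int_of_lint {f : ℝ → ℝ} {S : ℝ} (hf : ContinuousOn f (Ioi R)) (h0 : ∀ x, R < x → 0 ≤ f x)
    (hS0 : 0 ≤ S) (hS : ∫⁻ x in Ioi R, ENNReal.ofReal (f x) ≤ ENNReal.ofReal S)
    {a b : ℝ} (ha : R < a) (hab : a ≤ b) : ∫ x in a..b, f x ≤ S := by
  have hi := (ii_of hf ha hab).1
  rw [← ENNReal.ofReal_le_ofReal_iff hS0, intervalIntegral.integral_of_le hab,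
    ofReal_integral_eq_lintegral_ofReal hi]
  · refine le_trans (lintegral_mono_set ?_) hS
    exact fun x hx => ha.trans hx.1
  · refine (ae_restrict_iff' measurableSet_Ioc).2 (ae_of_all _ ?_)
    intro x hx
    exact h0 x (ha.trans hx.1)

lemma shift_lint (f : ℝ → ℝ≥0∞) : ∫⁻ r in Ioi (R + t), f r = ∫⁻ ξ in Ioi R, f (ξ + t) := by
  have := (measurePreserving_add_right volume t).setLIntegral_comp_preimage_emb
    (measurableEmbedding_addRight t) f (Ioi (R + t))
  rw [← this]
  congr 2
  ext x; simp

lemma pos_of_ae {g : ℝ → ℝ} (hg : ContinuousOn g (Ici 0))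
    (h : ∀ᵐ t ∂(volume.restrict (Ioi (0:ℝ))), 0 ≤ g t) {t : ℝ} (ht : 0 ≤ t) : 0 ≤ g t := by
  by_contra! hc
  have h1 : ∀ᶠ s in nhdsWithin t (Ici 0), g s < 0 := (hg t ht).eventually (eventually_lt_nhds hc)
  have h2 : ∀ᶠ s in nhdsWithin t (Ioi t), g s < 0 :=
    h1.filter_mono (nhdsWithin_mono t (fun s hs => le_trans ht (le_of_lt hs)))
  obtain ⟨b, hb, hsub⟩ := mem_nhdsGT_iff_exists_Ioo_subset.1 h2
  have h3 := (ae_restrict_iff' measurableSet_Ioi).1 h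
  have h4 : volume (Ioo t b) = 0 := by
    refine measure_mono_null ?_ (ae_iff.1 h3)
    intro s hs
    have := hsub hs
    simp only [mem_ofPred_eq] at this ⊢
    intro hh
    exact absurd (hh (lt_of_le_of_lt ht hs.1)) (not_le.2 this)
  rw [Real.volume_Ioo, ENNReal.ofReal_eq_zero] at h4
  linarith [mem_Ioi.1 hb]

end

lemma exh {R : ℝ} (n : ℕ) : R < R + 1 / ((n:ℝ) + 1) ∧ R + 1 / ((n:ℝ) + 1) ≤ R + 1 + n := by
  have hp : 0 < 1 / ((n:ℝ) + 1) := by positivity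
  have hp1 : 1 / ((n:ℝ) + 1) ≤ 1 := by
    rw [div_le_one (by positivity)]; have : (0:ℝ) ≤ n := by positivity
    linarith
  have : (0:ℝ) ≤ n := by positivity
  constructor <;> linarith

lemma double_lint {R S : ℝ} {N : ℝ → ℝ → ℝ}
    (hN : ContinuousOn (fun q : ℝ × ℝ => N q.1 q.2) (Ici 0 ×ˢ Ioi R))
    (h0 : ∀ τ ξ, 0 ≤ N τ ξ)
    (hS : ∀ T a b, 0 ≤ T → R < a → a ≤ b → ∫ τ in (0:ℝ)..T, ∫ ξ in a..b, N τ ξ ≤ S) :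
    ∫⁻ τ in Ioi (0:ℝ), ∫⁻ ξ in Ioi R, ENNReal.ofReal (N τ ξ) ≤ ENNReal.ofReal S := by
  have am : ∀ s ⊆ (Ici (0:ℝ) ×ˢ Ioi R), AEMeasurable (fun q : ℝ × ℝ => ENNReal.ofReal (N q.1 q.2))
      ((volume.prod volume).restrict s) := by
    intro s hs
    exact ((hN.aemeasurable (measurableSet_Ici.prod measurableSet_Ioi)).mono_measure
      (Measure.restrict_mono_set _ hs)).ennreal_ofReal
  have e : ∀ A B : Set ℝ, A ×ˢ B ⊆ (Ici (0:ℝ) ×ˢ Ioi R) → ∫⁻ τ in A, ∫⁻ ξ in B, ENNReal.ofReal (N τ ξ)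
      = ∫⁻ q in A ×ˢ B, ENNReal.ofReal (N q.1 q.2) ∂(volume.prod volume) := by
    intro A B hAB
    have := am _ hAB
    rw [← Measure.prod_restrict] at this ⊢
    rw [lintegral_prod _ this]
  rw [e _ _ (prod_mono Ioi_subset_Ici_self subset_rfl)]
  have hU : Ioi (0:ℝ) ×ˢ Ioi R
      = ⋃ n : ℕ, Ioc (0:ℝ) n ×ˢ Ioc (R + 1 / ((n:ℝ) + 1)) (R + 1 + n) := by
    ext ⟨s, x⟩
    simp only [mem_prod, mem_Ioi, mem_iUnion, mem_Ioc]
    constructor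
    · rintro ⟨hs, hx⟩
      obtain ⟨n, hn⟩ := exists_nat_one_div_lt (sub_pos.2 hx)
      obtain ⟨k, hk⟩ := exists_nat_ge (max s (x - R - 1))
      have hk1 := (le_max_left _ _).trans hk
      have hk2 := (le_max_right _ _).trans hk
      have hk3 : (k:ℝ) ≤ ((max n k : ℕ):ℝ) := by exact_mod_cast le_max_right _ _
      refine ⟨max n k, ⟨hs, by linarith⟩, ?_, ?_⟩
      · have : 1 / (((max n k : ℕ):ℝ) + 1) ≤ 1 / ((n:ℝ) + 1) := by
          gcongr; exact le_max_left _ _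
        linarith
      · linarith
    · rintro ⟨n, hs, hn, _⟩
      have : 0 < 1 / ((n:ℝ) + 1) := by positivity
      exact ⟨hs.1, by linarith⟩
  rw [hU, setLIntegral_iUnion_of_directed]
  · apply iSup_le
    intro n
    obtain ⟨ha, hab⟩ := exh (R := R) n
    set a := R + 1 / ((n:ℝ) + 1)
    set b := R + 1 + (n:ℝ)
    have hn : (0:ℝ) ≤ n := by positivity
    rw [← e _ _ (prod_mono (fun s hs => hs.1.le) (fun x hx => ha.trans hx.1))]
    have inner : ∫⁻ τ in Ioc (0:ℝ) n, ∫⁻ ξ in Ioc a b, ENNReal.ofReal (N τ ξ)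
        = ∫⁻ τ in Ioc (0:ℝ) n, ENNReal.ofReal (∫ ξ in a..b, N τ ξ) := by
      apply setLIntegral_congr_fun measurableSet_Ioc
      intro τ hτ
      simp only
      rw [intervalIntegral.integral_of_le hab, ofReal_integral_eq_lintegral_ofReal]
      · exact (slice_ii hN hτ.1.le ha hab).1
      · exact ae_of_all _ (fun ξ => h0 τ ξ)
    rw [inner, ← ofReal_integral_eq_lintegral_ofReal, ← intervalIntegral.integral_of_le hn]
    · exact ENNReal.ofReal_le_ofReal (hS _ _ _ hn ha hab)
    · have : IntervalIntegrable (fun τ => ∫ ξ in a..b, N τ ξ) volume 0 n := by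
        apply rect_int_integrable hn hab
        exact hN.mono (prod_mono (fun s hs => hs.1) (fun x hx => ha.trans_le hx.1))
      exact this.1
    · exact ae_of_all _ (fun τ => intervalIntegral.integral_nonneg hab (fun ξ _ => h0 τ ξ))
  · apply Monotone.directed_le
    intro n k hnk
    have : (n:ℝ) ≤ k := by exact_mod_cast hnk
    apply Set.prod_mono
    · exact Ioc_subset_Ioc le_rfl this
    · apply Ioc_subset_Ioc
      · gcongr
      · linarith

section
variable {R t : ℝ} {v d : ℝ → ℝ}

/-- one-slice version of the density `bb` -/
noncomputable def b1 (t : ℝ) (v d : ℝ → ℝ) (ξ : ℝ) : ℝ :=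
  |(ξ + t) * (v ξ * d ξ) + 3 / 2 * v ξ ^ 2| + v ξ ^ 2

lemma Sl.b1c (h : Sl R t v d) : ContinuousOn (b1 t v d) (Ioi R) := by
  have := h.hdc
  have := h.hvc
  unfold b1
  fun_prop

lemma Sl.sup_le (h : Sl R t v d) {M q : ℝ} (hM : ∀ ξ, R < ξ → |v ξ| ≤ M / (ξ + t))
    (hq : ∀ a b, R < a → a ≤ b → ∫ ξ in a..b, b1 t v d ξ ≤ q) {a : ℝ} (ha : R < a) :
    (a + t) * v a ^ 2 ≤ 2 * q := by
  have hR := h.hR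
  have ht := h.ht
  have hdc := h.hdc
  have hvc := h.hvc
  have key : ∀ b, a ≤ b → (a + t) * v a ^ 2 ≤ M ^ 2 / (b + t) + 2 * q := by
    intro b hab
    have hb0 : 0 < b + t := by linarith
    have i3 : ContinuousOn (fun ξ => -(1 * v ξ ^ 2 + (ξ + t) * (2 * v ξ * d ξ))) (Ioi R) := by fun_prop
    have f : ∫ ξ in a..b, -(1 * v ξ ^ 2 + (ξ + t) * (2 * v ξ * d ξ))
        = -((b + t) * v b ^ 2) - -((a + t) * v a ^ 2) := by
      apply intervalIntegral.integral_eq_sub_of_hasDerivAt (f := fun ξ => -((ξ + t) * v ξ ^ 2))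
      · intro x hx
        rw [uIcc_of_le hab] at hx
        have r1 : HasDerivAt (fun s : ℝ => s + t) 1 x := by
          simpa using (hasDerivAt_id x).add_const t
        refine (r1.fun_mul ((h.hd x (ha.trans_le hx.1)).fun_pow 2)).fun_neg.congr_deriv ?_
        simp only [show (2 - 1 : ℕ) = 1 from rfl, Nat.cast_ofNat, pow_one]
      · exact ii_of i3 ha hab
    have mono : ∫ ξ in a..b, -(1 * v ξ ^ 2 + (ξ + t) * (2 * v ξ * d ξ)) ≤
        ∫ ξ in a..b, 2 * b1 t v d ξ := by
      apply intervalIntegral.integral_mono_on hab (ii_of i3 ha hab) ((ii_of h.b1c ha hab).const_mul 2)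
      intro x hx
      unfold b1
      have := neg_abs_le ((x + t) * (v x * d x) + 3 / 2 * v x ^ 2)
      nlinarith [sq_nonneg (v x)]
    rw [f, intervalIntegral.integral_const_mul] at mono
    have hb : (b + t) * v b ^ 2 ≤ M ^ 2 / (b + t) := by
      have := hM b (ha.trans_le hab)
      rw [le_div_iff₀ hb0] at this ⊢
      rw [← sq_abs (v b)]
      calc (b + t) * |v b| ^ 2 * (b + t) = (|v b| * (b + t)) ^ 2 := by ring
        _ ≤ _ := pow_le_pow_left₀ (by positivity) this 2
    linarith [hq a b ha hab]
  have lim : Tendsto (fun b : ℝ => M ^ 2 / (b + t) + 2 * q) atTop (nhds (0 + 2 * q)) := by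
    apply Tendsto.add_const
    exact Tendsto.div_atTop tendsto_const_nhds (tendsto_atTop_add_const_right _ _ tendsto_id)
  rw [zero_add] at lim
  exact ge_of_tendsto lim ((eventually_ge_atTop a).mono key)

lemma Sl.st (h : Sl R t v d) {y : ℝ} (hy : 0 < y) (hM : ∀ ξ, R < ξ → (ξ + t) ^ 2 * v ξ ^ 2 ≤ 224 * y ^ 2) :
    (∫⁻ ξ in Ioi R, ENNReal.ofReal (|v ξ| ^ (8:ℝ) * (ξ + t) ^ 3)) ^ ((2:ℝ) / 8)
        ≤ 2 * ∫⁻ ξ in Ioi R, ENNReal.ofReal (b1 t v d ξ) ∧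
    (∫⁻ ξ in Ioi R, ENNReal.ofReal (|v ξ| ^ (6:ℝ) * (ξ + t) ^ 3)) ^ ((3:ℝ) / 6)
        ≤ ENNReal.ofReal (22 * y) * ∫⁻ ξ in Ioi R, ENNReal.ofReal (b1 t v d ξ) := by
  have hR := h.hR
  have ht := h.ht
  set Q := ∫⁻ ξ in Ioi R, ENNReal.ofReal (b1 t v d ξ) with hQ
  by_cases hT : Q = ⊤
  · rw [hT, ENNReal.mul_top (by simp), ENNReal.mul_top (by simpa using hy)]
    simp
  set q := Q.toReal with hqd
  have hQq : Q = ENNReal.ofReal q := (ENNReal.ofReal_toReal hT).symm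
  have hq0 : 0 ≤ q := ENNReal.toReal_nonneg
  have b0 : ∀ x, 0 ≤ b1 t v d x := fun x => by unfold b1; positivity
  have hM' : ∀ ξ, R < ξ → |v ξ| ≤ (15 * y) / (ξ + t) := by
    intro ξ hξ
    rw [le_div_iff₀ (by linarith)]
    refine abs_le_of_sq_le_sq' ?_ (by positivity) |>.2
    rw [mul_pow, sq_abs]
    nlinarith [hM ξ hξ]
  have hsup : ∀ ξ, R < ξ → (ξ + t) * v ξ ^ 2 ≤ 2 * q := fun ξ hξ =>
    h.sup_le hM' (fun a b ha hab => int_of_lint h.b1c (fun x _ => b0 x) hq0 hQq.le ha hab) hξ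
  have hv : ∀ ξ, v ξ ^ 2 ≤ b1 t v d ξ := fun ξ => by
    unfold b1; linarith [abs_nonneg ((ξ + t) * (v ξ * d ξ) + 3 / 2 * v ξ ^ 2)]
  constructor
  · have h1 : ∫⁻ ξ in Ioi R, ENNReal.ofReal (|v ξ| ^ (8:ℝ) * (ξ + t) ^ 3)
        ≤ ∫⁻ ξ in Ioi R, ENNReal.ofReal ((2 * q) ^ 3) * ENNReal.ofReal (b1 t v d ξ) := by
      apply setLIntegral_mono' measurableSet_Ioi
      intro ξ hξ
      have hξ' := mem_Ioi.1 hξ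
      have hs : 0 < ξ + t := by linarith
      rw [← ENNReal.ofReal_mul (by positivity)]
      apply ENNReal.ofReal_le_ofReal
      have e : |v ξ| ^ (8:ℝ) = v ξ ^ 8 := by
        rw [show (8:ℝ) = ((8:ℕ):ℝ) by norm_num, Real.rpow_natCast]
        exact Even.pow_abs (by decide) _
      rw [e]
      calc v ξ ^ 8 * (ξ + t) ^ 3 = ((ξ + t) * v ξ ^ 2) ^ 3 * v ξ ^ 2 := by ring
        _ ≤ _ := mul_le_mul (pow_le_pow_left₀ (by positivity) (hsup ξ hξ') 3) (hv ξ) (by positivity)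
          (by positivity)
    rw [lintegral_const_mul' _ _ ENNReal.ofReal_ne_top, ← hQ, hQq, ← ENNReal.ofReal_mul (by positivity)] at h1
    have h2 : ENNReal.ofReal ((2 * q) ^ 3 * q) ≤ ENNReal.ofReal (2 * q) ^ (4:ℝ) := by
      rw [ENNReal.ofReal_rpow_of_nonneg (by positivity) (by norm_num)]
      apply ENNReal.ofReal_le_ofReal
      rw [show (4:ℝ) = ((4:ℕ):ℝ) by norm_num, Real.rpow_natCast]
      nlinarith [pow_nonneg hq0 4]
    calc _ ≤ (ENNReal.ofReal (2 * q) ^ (4:ℝ)) ^ ((2:ℝ) / 8) :=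
          ENNReal.rpow_le_rpow (h1.trans h2) (by norm_num)
      _ = ENNReal.ofReal (2 * q) := by
          rw [← ENNReal.rpow_mul]; norm_num
      _ = 2 * Q := by
          rw [ENNReal.ofReal_mul (by norm_num), ← hQq]; simp
  · have h1 : ∫⁻ ξ in Ioi R, ENNReal.ofReal (|v ξ| ^ (6:ℝ) * (ξ + t) ^ 3)
        ≤ ∫⁻ ξ in Ioi R, ENNReal.ofReal (224 * y ^ 2 * (2 * q)) * ENNReal.ofReal (b1 t v d ξ) := by
      apply setLIntegral_mono' measurableSet_Ioi
      intro ξ hξ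
      have hξ' := mem_Ioi.1 hξ
      have hs : 0 < ξ + t := by linarith
      rw [← ENNReal.ofReal_mul (by positivity)]
      apply ENNReal.ofReal_le_ofReal
      have e : |v ξ| ^ (6:ℝ) = v ξ ^ 6 := by
        rw [show (6:ℝ) = ((6:ℕ):ℝ) by norm_num, Real.rpow_natCast]
        exact Even.pow_abs (by decide) _
      rw [e]
      calc v ξ ^ 6 * (ξ + t) ^ 3 = ((ξ + t) ^ 2 * v ξ ^ 2) * ((ξ + t) * v ξ ^ 2) * v ξ ^ 2 := by ring
        _ ≤ _ := mul_le_mul (mul_le_mul (hM ξ hξ') (hsup ξ hξ') (by positivity) (by positivity)) (hv ξ) (by positivity)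
          (by positivity)
    rw [lintegral_const_mul' _ _ ENNReal.ofReal_ne_top, ← hQ, hQq, ← ENNReal.ofReal_mul (by positivity)] at h1
    have h2 : ENNReal.ofReal (224 * y ^ 2 * (2 * q) * q) ≤ ENNReal.ofReal (22 * y * q) ^ (2:ℝ) := by
      rw [ENNReal.ofReal_rpow_of_nonneg (by positivity) (by norm_num)]
      apply ENNReal.ofReal_le_ofReal
      rw [show (2:ℝ) = ((2:ℕ):ℝ) by norm_num, Real.rpow_natCast]
      push_cast
      nlinarith [sq_nonneg (y * q)]
    calc _ ≤ (ENNReal.ofReal (22 * y * q) ^ (2:ℝ)) ^ ((3:ℝ) / 6) :=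
          ENNReal.rpow_le_rpow (h1.trans h2) (by norm_num)
      _ = ENNReal.ofReal (22 * y * q) := by
          rw [← ENNReal.rpow_mul]; norm_num
      _ = _ := by
          rw [ENNReal.ofReal_mul (by positivity), ← hQq]

end

lemma eH_sq {ρ y : ℝ} {v w : ℝ → ℝ} (hy : 0 ≤ y) (h : eH ρ v w ≤ ENNReal.ofReal y) :
    (∫⁻ r in Ioi ρ, ENNReal.ofReal ((deriv v r) ^ 2 * r ^ 3)) ≤ ENNReal.ofReal (y ^ 2) ∧
    (∫⁻ r in Ioi ρ, ENNReal.ofReal ((w r) ^ 2 * r ^ 3)) ≤ ENNReal.ofReal (y ^ 2) := by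
  unfold eH at h
  have h2 := ENNReal.rpow_le_rpow h (show (0:ℝ) ≤ 2 by norm_num)
  rw [← ENNReal.rpow_mul, ENNReal.ofReal_rpow_of_nonneg hy (by norm_num)] at h2
  norm_num at h2
  exact ⟨le_self_add.trans h2, le_add_self.trans h2⟩

lemma eH_of {ρ S y : ℝ} {v w : ℝ → ℝ} (hy : 0 ≤ y) (hS0 : 0 ≤ S) (hSy : 2 * S ≤ y ^ 2)
    (h1 : (∫⁻ r in Ioi ρ, ENNReal.ofReal ((deriv v r) ^ 2 * r ^ 3)) ≤ ENNReal.ofReal S)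
    (h2 : (∫⁻ r in Ioi ρ, ENNReal.ofReal ((w r) ^ 2 * r ^ 3)) ≤ ENNReal.ofReal S) :
    eH ρ v w ≤ ENNReal.ofReal y := by
  unfold eH
  have h3 := (add_le_add h1 h2)
  rw [← ENNReal.ofReal_add hS0 hS0] at h3
  have h4 : ENNReal.ofReal (S + S) ≤ ENNReal.ofReal (y ^ 2) := ENNReal.ofReal_le_ofReal (by linarith)
  refine (ENNReal.rpow_le_rpow (h3.trans h4) (by norm_num)).trans ?_
  rw [ENNReal.ofReal_rpow_of_nonneg (by positivity) (by norm_num)]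
  apply ENNReal.ofReal_le_ofReal
  rw [← Real.sqrt_eq_rpow, Real.sqrt_sq hy]

section
variable {j : ℕ} {R : ℝ} {U P D M Z : ℝ → ℝ → ℝ}

lemma ShiftSol.sl (h : ShiftSol j R U P D M Z) (hR : 0 < R) {t : ℝ} (ht : 0 ≤ t) :
    Sl R t (U t) (D t) := ⟨hR, ht, fun ξ hξ => h.Ux t ξ ht hξ, slice h.Dc ht⟩

lemma ShiftSol.cP (h : ShiftSol j R U P D M Z) {t : ℝ} (ht : 0 ≤ t) :
    ContinuousOn (fun ξ => (ξ + t) ^ 3 * P t ξ ^ 2) (Ioi R) := by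
  have := slice h.Pc ht
  fun_prop

lemma ShiftSol.cD (h : ShiftSol j R U P D M Z) {t : ℝ} (ht : 0 ≤ t) :
    ContinuousOn (fun ξ => (ξ + t) ^ 3 * D t ξ ^ 2) (Ioi R) := by
  have := slice h.Dc ht
  fun_prop

lemma ShiftSol.cU (h : ShiftSol j R U P D M Z) {t : ℝ} (ht : 0 ≤ t) :
    ContinuousOn (fun ξ => (ξ + t) * U t ξ ^ 2) (Ioi R) := by
  have := slice h.Uc ht
  fun_prop

lemma ShiftSol.BD_of (h : ShiftSol j R U P D M Z) (hR : 0 < R) {t m : ℝ} (ht : 0 ≤ t) (hm : 0 < m)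
    (hD : ∀ a b, R < a → a ≤ b → ∫ ξ in a..b, (ξ + t) ^ 3 * D t ξ ^ 2 ≤ m ^ 2)
    (hP : ∀ a b, R < a → a ≤ b → ∫ ξ in a..b, (ξ + t) ^ 3 * P t ξ ^ 2 ≤ m ^ 2)
    (hdec : ∀ ξ, R < ξ → |U t ξ| ≤ m / (ξ + t)) : BD R U P D t (7 * m ^ 2) := by
  intro a b ha hab
  have hU := (h.sl hR ht).hardy hm hD hdec ha hab
  have iP := (ii_of (h.cP ht) ha hab).const_mul (1 / 2)
  have iD := (ii_of (h.cD ht) ha hab).const_mul (5 / 4)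
  have iU := (ii_of (h.cU ht) ha hab).const_mul (9 / 4)
  have mono : ∫ ξ in a..b, ee U P D t ξ ≤ ∫ ξ in a..b, ((1 / 2 * ((ξ + t) ^ 3 * P t ξ ^ 2)
      + 5 / 4 * ((ξ + t) ^ 3 * D t ξ ^ 2)) + 9 / 4 * ((ξ + t) * U t ξ ^ 2)) := by
    apply intervalIntegral.integral_mono_on hab (slice_ii h.ee_c ht ha hab) ((iP.add iD).add iU)
    intro x hx
    have hs : 0 < x + t := by linarith [hx.1]
    unfold ee
    nlinarith [mul_nonneg hs.le (sq_nonneg (U t x - (x + t) * D t x))]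
  rw [intervalIntegral.integral_add (iP.add iD) iU, intervalIntegral.integral_add iP iD,
    intervalIntegral.integral_const_mul, intervalIntegral.integral_const_mul,
    intervalIntegral.integral_const_mul] at mono
  nlinarith [hD a b ha hab, hP a b ha hab]

lemma ShiftSol.of_BD (h : ShiftSol j R U P D M Z) (hR : 0 < R) {t S : ℝ} (ht : 0 ≤ t)
    (hB : BD R U P D t S) :
    (∀ a b, R < a → a ≤ b → ∫ ξ in a..b, (ξ + t) ^ 3 * D t ξ ^ 2 ≤ 8 * S) ∧
    (∀ a b, R < a → a ≤ b → ∫ ξ in a..b, (ξ + t) ^ 3 * P t ξ ^ 2 ≤ 8 * S) := by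
  constructor
  · intro a b ha hab
    have mono : ∫ ξ in a..b, (ξ + t) ^ 3 * D t ξ ^ 2 ≤ ∫ ξ in a..b, 8 * ee U P D t ξ := by
      apply intervalIntegral.integral_mono_on hab (ii_of (h.cD ht) ha hab)
        ((slice_ii h.ee_c ht ha hab).const_mul 8)
      intro x hx
      have hs : 0 < x + t := by linarith [hx.1]
      unfold ee
      have : 0 ≤ (x + t) ^ 3 * P t x ^ 2 := by positivity
      nlinarith [mul_nonneg hs.le (sq_nonneg (2 * U t x + (x + t) * D t x))]
    rw [intervalIntegral.integral_const_mul] at mono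
    linarith [hB a b ha hab]
  · intro a b ha hab
    have mono : ∫ ξ in a..b, (ξ + t) ^ 3 * P t ξ ^ 2 ≤ ∫ ξ in a..b, 8 * ee U P D t ξ := by
      apply intervalIntegral.integral_mono_on hab (ii_of (h.cP ht) ha hab)
        ((slice_ii h.ee_c ht ha hab).const_mul 8)
      intro x hx
      have hs : 0 < x + t := by linarith [hx.1]
      unfold ee
      have : 0 ≤ (x + t) ^ 3 * P t x ^ 2 := by positivity
      have : 0 ≤ (x + t) ^ 3 * D t x ^ 2 := by positivity
      nlinarith [mul_nonneg hs.le (sq_nonneg (2 * U t x + (x + t) * D t x))]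
    rw [intervalIntegral.integral_const_mul] at mono
    linarith [hB a b ha hab]

lemma ShiftSol.dec_of_BD (h : ShiftSol j R U P D M Z) (hR : 0 < R) {t S Ms : ℝ} (ht : 0 ≤ t)
    (hM : ∀ ξ, R < ξ → |U t ξ| ≤ Ms / (ξ + t))
    (hB : BD R U P D t S) {ξ : ℝ} (hξ : R < ξ) : (ξ + t) ^ 2 * U t ξ ^ 2 ≤ 8 * S := by
  have hS0 : 0 ≤ S := by
    have := hB (R + 1) (R + 1) (by linarith) le_rfl
    simpa using this
  apply le_of_forall_pos_le_add
  intro ε hε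
  have hp : 0 < 8 * S + ε := by linarith
  have hd := (h.sl hR ht).decay (m := Real.sqrt (8 * S + ε)) (Real.sqrt_pos.2 hp)
    (fun a b ha hab => by
      rw [Real.sq_sqrt hp.le]
      linarith [(h.of_BD hR ht hB).1 a b ha hab]) hM hξ
  rw [le_div_iff₀ (by linarith)] at hd
  rw [← sq_abs (U t ξ), ← mul_pow, mul_comm, ← Real.sq_sqrt hp.le]
  exact pow_le_pow_left₀ (mul_nonneg (abs_nonneg _) (by linarith)) hd 2

end

lemma meas8 {R : ℝ} {u : ℝ → ℝ → ℝ}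
    (h : ContinuousOn (fun q : ℝ × ℝ => u q.1 q.2) {q : ℝ × ℝ | R + |q.1| < q.2}) :
    Measurable (fun t : ℝ => ∫⁻ r in Ioi (R + |t|), ENNReal.ofReal (|u t r| ^ (8:ℝ) * r ^ 3)) := by
  classical
  set Ω := {q : ℝ × ℝ | R + |q.1| < q.2} with hΩ
  have hm : MeasurableSet Ω := (isOpen_ext R).measurableSet
  have c : ContinuousOn (fun q : ℝ × ℝ => ENNReal.ofReal (|u q.1 q.2| ^ (8:ℝ) * q.2 ^ 3)) Ω := by
    apply ENNReal.continuous_ofReal.comp_continuousOn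
    apply ContinuousOn.mul _ (by fun_prop)
    exact h.abs.rpow_const (fun x _ => Or.inr (by norm_num))
  have m : Measurable (Ω.piecewise (fun q : ℝ × ℝ => ENNReal.ofReal (|u q.1 q.2| ^ (8:ℝ) * q.2 ^ 3))
      (fun _ => 0)) := c.measurable_piecewise continuousOn_const hm
  have := m.lintegral_prod_right' (ν := volume)
  convert this using 1
  funext t
  rw [← lintegral_indicator measurableSet_Ioi]
  apply lintegral_congr
  intro r
  by_cases hr : R + |t| < r
  · have h1 : (t, r) ∈ Ω := hr
    simp [Set.piecewise, h1, hr]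
  · have h1 : (t, r) ∉ Ω := hr
    simp [Set.piecewise, h1, hr]

theorem fwd {j : ℕ} {R : ℝ} {u : ℝ → ℝ → ℝ} (hR : 0 < R) (h : IsExtSol (2 * j + 5) 2 R u)
    (h8 : eLL 2 8 R u < ⊤) (hs : supH R u < ⊤) {y : ℝ} (hy : 0 < y)
    (h0 : eH R (u 0) (fun r => dtu u 0 r) ≤ ENNReal.ofReal y)
    (hsmall : 2 * (2 * (14 * y ^ 2)) * (3 * (8 * (2 * (14 * y ^ 2))) ^ (j + 2) / R ^ (2 * j + 1)) * (1 / R)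
      ≤ 14 * y ^ 2 / 2) :
    (∀ t, 0 ≤ t → eH (R + |t|) (u t) (fun r => dtu u t r) ≤ ENNReal.ofReal (22 * y)) ∧
    ∫⁻ t in Ioi (0:ℝ), (∫⁻ r in Ioi (R + |t|), ENNReal.ofReal (|u t r| ^ (8:ℝ) * r ^ 3)) ^ ((2:ℝ) / 8)
      ≤ ENNReal.ofReal (1792 * y ^ 2) ∧
    ∫⁻ t in Ioi (0:ℝ), (∫⁻ r in Ioi (R + |t|), ENNReal.ofReal (|u t r| ^ (6:ℝ) * r ^ 3)) ^ ((3:ℝ) / 6)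
      ≤ ENNReal.ofReal (19712 * y ^ 3) := by
  obtain ⟨M, Z, sol⟩ := regularity h
  set U : ℝ → ℝ → ℝ := fun t ξ => u t (ξ + t) with hU
  set P : ℝ → ℝ → ℝ := fun t ξ => dtu u t (ξ + t) with hP
  set D : ℝ → ℝ → ℝ := fun t ξ => deriv (u t) (ξ + t) with hD
  -- energy bounds at a given time
  have en : ∀ t m, 0 ≤ t → 0 < m → eH (R + |t|) (u t) (fun r => dtu u t r) ≤ ENNReal.ofReal m →
      (∀ a b, R < a → a ≤ b → ∫ ξ in a..b, (ξ + t) ^ 3 * D t ξ ^ 2 ≤ m ^ 2) ∧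
      (∀ a b, R < a → a ≤ b → ∫ ξ in a..b, (ξ + t) ^ 3 * P t ξ ^ 2 ≤ m ^ 2) := by
    intro t m ht hm he
    obtain ⟨e1, e2⟩ := eH_sq hm.le he
    rw [abs_of_nonneg ht, shift_lint] at e1 e2
    constructor
    · intro a b ha hab
      refine int_of_lint (sol.cD ht) ?_ (by positivity) ?_ ha hab
      · intro x hx
        have : 0 < x + t := by linarith
        positivity
      · simpa only [mul_comm] using e1
    · intro a b ha hab
      refine int_of_lint (sol.cP ht) ?_ (by positivity) ?_ ha hab
      · intro x hx
        have : 0 < x + t := by linarith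
        positivity
      · simpa only [mul_comm] using e2
  set Ms := (supH R u).toReal + 1 with hMs
  have hMs0 : 0 < Ms := by have : 0 ≤ (supH R u).toReal := ENNReal.toReal_nonneg
                           linarith
  have enM : ∀ t, eH (R + |t|) (u t) (fun r => dtu u t r) ≤ ENNReal.ofReal Ms := by
    intro t
    have h1 : eH (R + |t|) (u t) (fun r => dtu u t r) ≤ supH R u :=
      le_iSup (fun t => eH (R + |t|) (u t) (fun r => dtu u t r)) t
    refine h1.trans ?_
    rw [← ENNReal.ofReal_toReal hs.ne]
    exact ENNReal.ofReal_le_ofReal (by linarith)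
  -- a priori decay
  have fin8 : ∀ᵐ t : ℝ, ∫⁻ r in Ioi (R + |t|), ENNReal.ofReal (|u t r| ^ (8:ℝ) * r ^ 3) < ⊤ := by
    have hne : ∫⁻ t : ℝ, (∫⁻ r in Ioi (R + |t|), ENNReal.ofReal (|u t r| ^ (8:ℝ) * r ^ 3)) ^ ((2:ℝ) / 8) ≠ ⊤ := by
      intro hc
      unfold eLL at h8
      rw [hc, ENNReal.top_rpow_of_pos (by norm_num)] at h8
      exact lt_irrefl _ h8
    have := ae_lt_top' ((meas8 h.1.continuousOn).pow_const _).aemeasurable hne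
    filter_upwards [this] with t ht
    by_contra hc
    rw [not_lt_top_iff.1 hc, ENNReal.top_rpow_of_pos (by norm_num)] at ht
    exact lt_irrefl _ ht
  have decM : ∀ t, 0 ≤ t → ∀ ξ, R < ξ → |U t ξ| ≤ Ms / (ξ + t) := by
    intro t ht ξ hξ
    have : 0 ≤ (fun t => Ms / (ξ + t) - |U t ξ|) t := by
      apply pos_of_ae _ _ ht
      · apply ContinuousOn.sub
        · apply ContinuousOn.div continuousOn_const (by fun_prop)
          intro x hx
          have : 0 < ξ + x := by linarith [mem_Ici.1 hx]
          positivity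
        · apply ContinuousOn.abs
          have c1 : ContinuousOn (fun τ : ℝ => ((τ, ξ) : ℝ × ℝ)) (Ici 0) := by fun_prop
          exact sol.Uc.comp c1 (fun τ hτ => ⟨hτ, hξ⟩)
      · rw [ae_restrict_iff' measurableSet_Ioi]
        filter_upwards [fin8] with t h8t ht
        have ht := (mem_Ioi.1 ht).le
        rw [abs_of_nonneg ht, shift_lint] at h8t
        have := (sol.sl hR ht).decay8 hMs0 (en t Ms ht hMs0 (enM t)).1 h8t hξ
        simpa using this
    simpa using this
  have hdec : ∀ τ S, 0 ≤ τ → BD R U P D τ S → ∀ ξ, R < ξ → (ξ + τ) ^ 2 * U τ ξ ^ 2 ≤ 8 * S :=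
    fun τ S hτ hB ξ hξ => sol.dec_of_BD hR hτ (decM τ hτ) hB hξ
  have BDof : ∀ t m, 0 ≤ t → 0 < m → eH (R + |t|) (u t) (fun r => dtu u t r) ≤ ENNReal.ofReal m →
      BD R U P D t (7 * m ^ 2) := by
    intro t m ht hm he
    obtain ⟨e1, e2⟩ := en t m ht hm he
    exact sol.BD_of hR ht hm e1 e2 (fun ξ hξ => (sol.sl hR ht).decay hm e1 (decM t ht) hξ)
  have hB0 : BD R U P D 0 (14 * y ^ 2 / 2) := by
    have := BDof 0 y le_rfl hy (by simpa using h0)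
    convert this using 1; ring
  obtain ⟨b1', b2⟩ := sol.bootstrap hR hdec (K := 14 * y ^ 2)
    (fun τ hτ => BDof τ Ms hτ hMs0 (enM τ)) (by positivity) hB0 hsmall
  have dbl := double_lint sol.bb_c (fun τ ξ => bb_nonneg τ ξ) b2
  have st : ∀ t : ℝ, 0 ≤ t → _ := fun t ht => (sol.sl hR ht).st hy (fun ξ hξ => by
    have := hdec t _ ht (b1' t ht) ξ hξ
    linarith)
  refine ⟨?_, ?_, ?_⟩
  · intro t ht
    obtain ⟨e1, e2⟩ := sol.of_BD hR ht (b1' t ht)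
    have nn : ∀ (g : ℝ → ℝ) x, R < x → 0 ≤ (x + t) ^ 3 * g x ^ 2 := by
      intro g x hx
      have : 0 < x + t := by linarith
      positivity
    refine eH_of (S := 8 * (2 * (14 * y ^ 2))) (by positivity) (by positivity)
      (by nlinarith [sq_nonneg y]) ?_ ?_
    · rw [abs_of_nonneg ht, shift_lint]
      simpa only [mul_comm] using lint_of_int (sol.cD ht) (nn (D t)) e1
    · rw [abs_of_nonneg ht, shift_lint]
      simpa only [mul_comm] using lint_of_int (sol.cP ht) (nn (P t)) e2
  · calc _ ≤ ∫⁻ t in Ioi (0:ℝ), 2 * ∫⁻ ξ in Ioi R, ENNReal.ofReal (bb U D t ξ) := by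
          apply setLIntegral_mono' measurableSet_Ioi
          intro t ht
          have ht := (mem_Ioi.1 ht).le
          rw [abs_of_nonneg ht, shift_lint]
          exact (st t ht).1
      _ = 2 * ∫⁻ t in Ioi (0:ℝ), ∫⁻ ξ in Ioi R, ENNReal.ofReal (bb U D t ξ) :=
          lintegral_const_mul' _ _ (by simp)
      _ ≤ ENNReal.ofReal 2 * ENNReal.ofReal (64 * (14 * y ^ 2)) := by
          rw [ENNReal.ofReal_ofNat]; gcongr
      _ = _ := by
          rw [← ENNReal.ofReal_mul (by norm_num)]; congr 1; ring
  · calc _ ≤ ∫⁻ t in Ioi (0:ℝ), ENNReal.ofReal (22 * y) * ∫⁻ ξ in Ioi R, ENNReal.ofReal (bb U D t ξ) := by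
          apply setLIntegral_mono' measurableSet_Ioi
          intro t ht
          have ht := (mem_Ioi.1 ht).le
          rw [abs_of_nonneg ht, shift_lint]
          exact (st t ht).2
      _ = ENNReal.ofReal (22 * y) * ∫⁻ t in Ioi (0:ℝ), ∫⁻ ξ in Ioi R, ENNReal.ofReal (bb U D t ξ) :=
          lintegral_const_mul' _ _ ENNReal.ofReal_ne_top
      _ ≤ ENNReal.ofReal (22 * y) * ENNReal.ofReal (64 * (14 * y ^ 2)) := by
          gcongr
      _ = _ := by
          rw [← ENNReal.ofReal_mul (by positivity)]; congr 1; ring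

lemma dtu_rev (u : ℝ → ℝ → ℝ) (t r : ℝ) : dtu (fun t r => u (-t) r) t r = - dtu u (-t) r := by
  unfold dtu
  exact deriv_comp_neg (fun s => u s r) t

lemma rev_sol {p : ℕ} {R : ℝ} {u : ℝ → ℝ → ℝ} (h : IsExtSol p 2 R u) :
    IsExtSol p 2 R (fun t r => u (-t) r) := by
  obtain ⟨h1, h2⟩ := h
  constructor
  · have c : ContDiff ℝ (2 : ℕ∞) (fun q : ℝ × ℝ => ((-q.1, q.2) : ℝ × ℝ)) := by fun_prop
    refine h1.comp c.contDiffOn ?_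
    intro q hq
    have : R + |q.1| < q.2 := hq
    simpa using this
  · intro t r hr
    have h3 := h2 (-t) r (by rwa [abs_neg])
    have e : deriv (fun s => dtu (fun t r => u (-t) r) s r) t = deriv (fun s => dtu u s r) (-t) := by
      have : (fun s => dtu (fun t r => u (-t) r) s r) = fun s => - (fun s => dtu u s r) (-s) := by
        funext s; exact dtu_rev u s r
      rw [this, deriv.fun_neg, deriv_comp_neg (fun s => dtu u s r) t, neg_neg]
    rw [e]
    exact h3

lemma rev_eH (ρ : ℝ) (u : ℝ → ℝ → ℝ) (t : ℝ) :
    eH ρ ((fun t r => u (-t) r) t) (fun r => dtu (fun t r => u (-t) r) t r)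
      = eH ρ (u (-t)) (fun r => dtu u (-t) r) := by
  unfold eH
  simp only [dtu_rev, neg_sq]

lemma rev_supH (R : ℝ) (u : ℝ → ℝ → ℝ) : supH R (fun t r => u (-t) r) ≤ supH R u := by
  unfold supH
  apply iSup_le
  intro t
  have := rev_eH (R + |t|) u t
  rw [this, ← abs_neg t]
  exact le_iSup (fun t => eH (R + |t|) (u t) (fun r => dtu u t r)) (-t)

lemma lint_neg (f : ℝ → ℝ≥0∞) : ∫⁻ t, f (-t) = ∫⁻ t, f t :=
  (Measure.measurePreserving_neg (volume : Measure ℝ)).lintegral_comp_emb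
    (MeasurableEquiv.neg ℝ).measurableEmbedding f

lemma lint_split (f : ℝ → ℝ≥0∞) :
    ∫⁻ t, f t = (∫⁻ t in Ioi (0:ℝ), f t) + ∫⁻ t in Ioi (0:ℝ), f (-t) := by
  rw [← lintegral_add_compl f (measurableSet_Ioi (a := (0:ℝ))), compl_Ioi]
  congr 1
  rw [← setLIntegral_congr (Iio_ae_eq_Iic (a := (0:ℝ)))]
  have := (Measure.measurePreserving_neg (volume : Measure ℝ)).setLIntegral_comp_preimage_emb
    (MeasurableEquiv.neg ℝ).measurableEmbedding f (Iio 0)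
  rw [← this]
  congr 2
  ext x; simp

lemma rev_eLL (a b R : ℝ) (u : ℝ → ℝ → ℝ) : eLL a b R (fun t r => u (-t) r) = eLL a b R u := by
  unfold eLL
  rw [← lint_neg (fun t => (∫⁻ r in Ioi (R + |t|), ENNReal.ofReal (|u t r| ^ b * r ^ 3)) ^ (a / b))]
  simp only [abs_neg]

theorem both {j : ℕ} {R : ℝ} {u : ℝ → ℝ → ℝ} (hR : 0 < R) (h : IsExtSol (2 * j + 5) 2 R u)
    (h8 : eLL 2 8 R u < ⊤) (hs : supH R u < ⊤) {y : ℝ} (hy : 0 < y)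
    (h0 : eH R (u 0) (fun r => dtu u 0 r) ≤ ENNReal.ofReal y)
    (hsmall : 2 * (2 * (14 * y ^ 2)) * (3 * (8 * (2 * (14 * y ^ 2))) ^ (j + 2) / R ^ (2 * j + 1)) * (1 / R)
      ≤ 14 * y ^ 2 / 2) :
    eLL 2 8 R u + eLL 3 6 R u + supH R u ≤ ENNReal.ofReal (120 * y) := by
  obtain ⟨a1, a2, a3⟩ := fwd hR h h8 hs hy h0 hsmall
  obtain ⟨b1, b2, b3⟩ := fwd (u := fun t r => u (-t) r) hR (rev_sol h) (by rwa [rev_eLL])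
    ((rev_supH R u).trans_lt hs) hy (by have := rev_eH R u 0; rw [neg_zero] at this; rwa [this]) hsmall
  have s1 : eLL 2 8 R u ≤ ENNReal.ofReal (60 * y) := by
    unfold eLL
    rw [lint_split]
    simp only [abs_neg]
    have h3 := add_le_add a2 b2
    rw [← ENNReal.ofReal_add (by positivity) (by positivity)] at h3
    have h4 : ENNReal.ofReal (1792 * y ^ 2 + 1792 * y ^ 2) ≤ ENNReal.ofReal (60 * y) ^ (2:ℝ) := by
      rw [ENNReal.ofReal_rpow_of_nonneg (by positivity) (by norm_num)]
      apply ENNReal.ofReal_le_ofReal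
      rw [show (2:ℝ) = ((2:ℕ):ℝ) by norm_num, Real.rpow_natCast]
      push_cast
      nlinarith [sq_nonneg y]
    refine (ENNReal.rpow_le_rpow (h3.trans h4) (by norm_num)).trans ?_
    rw [← ENNReal.rpow_mul]; norm_num
  have s2 : eLL 3 6 R u ≤ ENNReal.ofReal (35 * y) := by
    unfold eLL
    rw [lint_split]
    simp only [abs_neg]
    have h3 := add_le_add a3 b3
    rw [← ENNReal.ofReal_add (by positivity) (by positivity)] at h3
    have h4 : ENNReal.ofReal (19712 * y ^ 3 + 19712 * y ^ 3) ≤ ENNReal.ofReal (35 * y) ^ (3:ℝ) := by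
      rw [ENNReal.ofReal_rpow_of_nonneg (by positivity) (by norm_num)]
      apply ENNReal.ofReal_le_ofReal
      rw [show (3:ℝ) = ((3:ℕ):ℝ) by norm_num, Real.rpow_natCast]
      push_cast
      nlinarith [pow_nonneg hy.le 3]
    refine (ENNReal.rpow_le_rpow (h3.trans h4) (by norm_num)).trans ?_
    rw [← ENNReal.rpow_mul]; norm_num
  have s3 : supH R u ≤ ENNReal.ofReal (22 * y) := by
    unfold supH
    apply iSup_le
    intro t
    rcases le_total 0 t with ht | ht
    · exact a1 t ht
    · have h1 := b1 (-t) (by linarith)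
      have h2 := rev_eH (R + |(-t)|) u (-t)
      rw [h2, neg_neg, abs_neg] at h1
      exact h1
  calc _ ≤ ENNReal.ofReal (60 * y) + ENNReal.ofReal (35 * y) + ENNReal.ofReal (22 * y) := by gcongr
    _ = ENNReal.ofReal (60 * y + 35 * y + 22 * y) := by
        rw [ENNReal.ofReal_add (by positivity) (by positivity), ENNReal.ofReal_add (by positivity) (by positivity)]
    _ ≤ _ := ENNReal.ofReal_le_ofReal (by linarith)

lemma small_of {j : ℕ} {R y : ℝ} (hR : 0 < R) (hy : 0 < y)
    (h : y ≤ 1 / 100 * R ^ ((((2 * j + 5 : ℕ):ℝ) - 3) / (((2 * j + 5 : ℕ):ℝ) - 1))) :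
    2 * (2 * (14 * y ^ 2)) * (3 * (8 * (2 * (14 * y ^ 2))) ^ (j + 2) / R ^ (2 * j + 1)) * (1 / R)
      ≤ 14 * y ^ 2 / 2 := by
  set ρ := R ^ ((((2 * j + 5 : ℕ):ℝ) - 3) / (((2 * j + 5 : ℕ):ℝ) - 1)) with hρ
  have hρ0 : 0 < ρ := Real.rpow_pos_of_pos hR _
  have hpow : (ρ ^ 2) ^ (j + 2) = R ^ (2 * j + 2) := by
    rw [← pow_mul, hρ, ← Real.rpow_natCast, ← Real.rpow_mul hR.le, ← Real.rpow_natCast R (2 * j + 2)]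
    congr 1
    push_cast
    have : (2 * (j:ℝ) + 5 - 1) ≠ 0 := by
      have : (0:ℝ) ≤ j := by positivity
      linarith
    field_simp
    ring
  have h1 : 224 * y ^ 2 ≤ 224 / 10000 * ρ ^ 2 := by
    have : y ^ 2 ≤ (1 / 100 * ρ) ^ 2 := pow_le_pow_left₀ hy.le h 2
    linarith
  have h2 : (224 * y ^ 2) ^ (j + 2) ≤ 1 / 24 * R ^ (2 * j + 2) := by
    calc (224 * y ^ 2) ^ (j + 2) ≤ (224 / 10000 * ρ ^ 2) ^ (j + 2) :=
          pow_le_pow_left₀ (by positivity) h1 _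
      _ = (224 / 10000) ^ (j + 2) * R ^ (2 * j + 2) := by rw [mul_pow, hpow]
      _ ≤ _ := by
          gcongr
          calc (224 / 10000 : ℝ) ^ (j + 2) ≤ (224 / 10000) ^ 2 :=
                pow_le_pow_of_le_one (by norm_num) (by norm_num) (by omega)
            _ ≤ _ := by norm_num
  have e : 2 * (2 * (14 * y ^ 2)) * (3 * (8 * (2 * (14 * y ^ 2))) ^ (j + 2) / R ^ (2 * j + 1)) * (1 / R)
      = 7 * y ^ 2 * (24 * (224 * y ^ 2) ^ (j + 2) / R ^ (2 * j + 2)) := by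
    rw [show 8 * (2 * (14 * y ^ 2)) = 224 * y ^ 2 by ring, show 2 * j + 2 = (2 * j + 1) + 1 by ring,
      pow_succ R]
    field_simp
    ring
  rw [e]
  have h3 : 24 * (224 * y ^ 2) ^ (j + 2) / R ^ (2 * j + 2) ≤ 1 := by
    rw [div_le_one (by positivity)]
    linarith
  nlinarith [sq_nonneg y]

/-- exterior small-data a priori estimate for the focusing
energy-supercritical wave equation in four space dimensions. -/
theorem stmt5 (p : ℕ) (hodd : Odd p) (hp5 : 5 ≤ p) :
    ∃ δ₀ > (0:ℝ), ∃ C > (0:ℝ), ∀ (R : ℝ), 0 < R → ∀ u : ℝ → ℝ → ℝ,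
      IsExtSol p 2 R u →
      eH R (u 0) (fun r => dtu u 0 r)
        ≤ ENNReal.ofReal (δ₀ * R ^ (((p:ℝ) - 3) / ((p:ℝ) - 1))) →
      eLL 2 8 R u < ⊤ → eLL 3 6 R u < ⊤ → supH R u < ⊤ →
      eLL 2 8 R u + eLL 3 6 R u + supH R u
        ≤ ENNReal.ofReal C * eH R (u 0) (fun r => dtu u 0 r) := by
  obtain ⟨j, rfl⟩ : ∃ j, p = 2 * j + 5 := by
    obtain ⟨k, hk⟩ := hodd
    exact ⟨k - 2, by omega⟩
  refine ⟨1 / 100, by norm_num, 120, by norm_num, ?_⟩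
  intro R hR u h hdata h8 _ hs
  set δ := 1 / 100 * R ^ ((((2 * j + 5 : ℕ):ℝ) - 3) / (((2 * j + 5 : ℕ):ℝ) - 1)) with hδ
  have hδ0 : 0 < δ := by
    have := Real.rpow_pos_of_pos hR ((((2 * j + 5 : ℕ):ℝ) - 3) / (((2 * j + 5 : ℕ):ℝ) - 1))
    positivity
  have hfin : eH R (u 0) (fun r => dtu u 0 r) ≠ ⊤ := ne_top_of_le_ne_top ENNReal.ofReal_ne_top hdata
  set m := (eH R (u 0) (fun r => dtu u 0 r)).toReal with hm
  have hme : eH R (u 0) (fun r => dtu u 0 r) = ENNReal.ofReal m := (ENNReal.ofReal_toReal hfin).symm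
  have hm0 : 0 ≤ m := ENNReal.toReal_nonneg
  have key : ∀ y, 0 < y → m ≤ y → y ≤ δ →
      eLL 2 8 R u + eLL 3 6 R u + supH R u ≤ ENNReal.ofReal (120 * y) := fun y hy hmy hyδ =>
    both hR h h8 hs hy (hme.le.trans (ENNReal.ofReal_le_ofReal hmy)) (small_of hR hy hyδ)
  rw [hme] at hdata
  have hmδ : m ≤ δ := (ENNReal.ofReal_le_ofReal_iff hδ0.le).1 hdata
  rw [hme, ← ENNReal.ofReal_mul (by norm_num)]
  rcases hm0.lt_or_eq with hpos | hz
  · exact key m hpos le_rfl hmδ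
  · rw [← hz, mul_zero, ENNReal.ofReal_zero]
    have lim : Tendsto (fun y : ℝ => ENNReal.ofReal (120 * y)) (nhdsWithin 0 (Ioi 0)) (nhds (ENNReal.ofReal (120 * 0))) := by
      have : Continuous (fun y : ℝ => ENNReal.ofReal (120 * y)) :=
        ENNReal.continuous_ofReal.comp (by fun_prop)
      exact this.continuousAt.continuousWithinAt
    rw [mul_zero, ENNReal.ofReal_zero] at lim
    refine ge_of_tendsto lim ?_
    filter_upwards [Ioc_mem_nhdsGT hδ0] with y hy
    exact key y hy.1 (by rw [← hz]; exact hy.1.le) hy.2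
end
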